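/- Suppose that for every quadratic extension L/K of number fields, the image of 𝒪_K in 𝒪_L has a diophantine definition over 𝒪_L. Then for every number field M, the image of ℤ in 𝒪_M has a diophantine definition over 𝒪_M. -/

import Mathlib

/-- A subset `E` of a commutative ring `R` has a diophantine definition over `R` if there is a
finite system of polynomials `f₁, …, f_k ∈ R[t, x₁, …, x_n]` such that `τ ∈ E` iff the system
`fᵢ(τ, a₁, …, a_n) = 0` has a solution `a₁, …, a_n ∈ R`. -/
def IsDiophantineOver (R : Type*) [CommRing R] (E : Set R) : Prop :=
  ∃ (n k : ℕ) (f : Fin k → MvPolynomial (Fin (n + 1)) R),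
    ∀ τ : R, τ ∈ E ↔ ∃ a : Fin n → R, ∀ i, MvPolynomial.eval (Fin.cons τ a) (f i) = 0

open MvPolynomial in
/-- A function on `α → R` given by a polynomial. -/
def IsPolyFun {R : Type} [CommRing R] {α : Type} (g : (α → R) → R) : Prop :=
  ∃ p : MvPolynomial α R, ∀ v, g v = MvPolynomial.eval v p

namespace IsPolyFun
variable {R : Type} [CommRing R] {α β : Type}

theorem const (c : R) : IsPolyFun (fun _ : α → R => c) := ⟨MvPolynomial.C c, by simp⟩
theorem proj (i : α) : IsPolyFun (fun v : α → R => v i) := ⟨MvPolynomial.X i, by simp⟩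
theorem add {f g : (α → R) → R} (hf : IsPolyFun f) (hg : IsPolyFun g) :
    IsPolyFun (fun v => f v + g v) := by
  obtain ⟨p, hp⟩ := hf; obtain ⟨q, hq⟩ := hg; exact ⟨p + q, by simp [hp, hq]⟩
theorem mul {f g : (α → R) → R} (hf : IsPolyFun f) (hg : IsPolyFun g) :
    IsPolyFun (fun v => f v * g v) := by
  obtain ⟨p, hp⟩ := hf; obtain ⟨q, hq⟩ := hg; exact ⟨p * q, by simp [hp, hq]⟩
theorem sub {f g : (α → R) → R} (hf : IsPolyFun f) (hg : IsPolyFun g) :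
    IsPolyFun (fun v => f v - g v) := by
  obtain ⟨p, hp⟩ := hf; obtain ⟨q, hq⟩ := hg; exact ⟨p - q, by simp [hp, hq]⟩
theorem pow {f : (α → R) → R} (hf : IsPolyFun f) (n : ℕ) :
    IsPolyFun (fun v => f v ^ n) := by
  obtain ⟨p, hp⟩ := hf; exact ⟨p ^ n, by simp [hp]⟩
theorem sum {κ : Type} (s : Finset κ) {f : κ → (α → R) → R} (hf : ∀ k, IsPolyFun (f k)) :
    IsPolyFun (fun v => ∑ k ∈ s, f k v) := by
  choose p hp using hf; exact ⟨∑ k ∈ s, p k, by simp [hp]⟩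
theorem comp {g : (β → R) → R} (hg : IsPolyFun g) {h : β → (α → R) → R}
    (hh : ∀ i, IsPolyFun (h i)) : IsPolyFun (fun v => g (fun i => h i v)) := by
  obtain ⟨p, hp⟩ := hg; choose q hq using hh
  refine ⟨MvPolynomial.bind₁ q p, fun v => ?_⟩
  simp only [hp, hq]
  exact (MvPolynomial.eval₂Hom_bind₁ (RingHom.id R) v q p).symm
end IsPolyFun

/-- Diophantine predicates in several variables. -/
def DioPred {R : Type} [CommRing R] {α : Type} (P : (α → R) → Prop) : Prop :=
  ∃ (β κ : Type) (_ : Finite β) (_ : Finite κ) (f : κ → (α → R) → (β → R) → R),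
    (∀ k, IsPolyFun (fun v : α ⊕ β → R => f k (fun i => v (Sum.inl i)) (fun i => v (Sum.inr i)))) ∧
    ∀ v, P v ↔ ∃ w, ∀ k, f k v w = 0

namespace DioPred
variable {R : Type} [CommRing R] {α γ : Type}

theorem eq {f g : (α → R) → R} (hf : IsPolyFun f) (hg : IsPolyFun g) :
    DioPred (fun v => f v = g v) := by
  refine ⟨Empty, Unit, inferInstance, inferInstance, fun _ v _ => f v - g v, fun _ => ?_, ?_⟩
  · exact (hf.comp (fun i => IsPolyFun.proj (Sum.inl i))).sub
      (hg.comp (fun i => IsPolyFun.proj (Sum.inl i)))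
  · intro v; simp [sub_eq_zero]

theorem congr {P Q : (α → R) → Prop} (hP : DioPred P) (h : ∀ v, Q v ↔ P v) : DioPred Q := by
  have : Q = P := funext fun v => propext (h v)
  rwa [this]

theorem all {κ : Type} [Finite κ] {P : κ → (α → R) → Prop} (hP : ∀ k, DioPred (P k)) :
    DioPred (fun v => ∀ k, P k v) := by
  choose β μ hβ hμ f hf hP using hP
  refine ⟨Σ k, β k, Σ k, μ k, inferInstance, inferInstance,
    fun k v w => f k.1 k.2 v (fun i => w ⟨k.1, i⟩), fun k => ?_, ?_⟩
  · refine (hf k.1 k.2).comp (h := fun i v => v (Sum.map id (fun j => (⟨k.1, j⟩ : Σ k, β k)) i)) ?_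
    intro i; exact IsPolyFun.proj _
  · intro v
    constructor
    · intro h
      choose w hw using fun k => (hP k v).1 (h k)
      exact ⟨fun i => w i.1 i.2, fun k => hw k.1 k.2⟩
    · rintro ⟨w, hw⟩ k
      exact (hP k v).2 ⟨fun i => w ⟨k, i⟩, fun j => hw ⟨k, j⟩⟩

theorem and {P Q : (α → R) → Prop} (hP : DioPred P) (hQ : DioPred Q) :
    DioPred (fun v => P v ∧ Q v) := by
  have := all (κ := Bool) (P := fun b v => if b then P v else Q v)
    (by intro b; cases b <;> simpa)
  refine this.congr fun v => ?_
  simp [Bool.forall_bool, and_comm]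

theorem exBlock [Finite γ] {Q : (α → R) → (γ → R) → Prop}
    (h : DioPred (fun v : α ⊕ γ → R => Q (fun i => v (Sum.inl i)) (fun i => v (Sum.inr i)))) :
    DioPred (fun v => ∃ x, Q v x) := by
  obtain ⟨β, μ, hβ, hμ, f, hf, hP⟩ := h
  refine ⟨γ ⊕ β, μ, inferInstance, inferInstance,
    fun k v w => f k (Sum.elim v (fun i => w (Sum.inl i))) (fun i => w (Sum.inr i)), fun k => ?_, ?_⟩
  · have := (hf k).comp (h := fun i v => v ((Equiv.sumAssoc α γ β) i))
      (fun i => IsPolyFun.proj _)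
    convert this using 4 with v
    · rename_i i
      rcases i with i | i <;> rfl
    · rfl
  · intro v
    constructor
    · rintro ⟨x, hx⟩
      have := (hP (Sum.elim v x)).1 (by simpa using hx)
      obtain ⟨w, hw⟩ := this
      exact ⟨Sum.elim x w, by simpa using hw⟩
    · rintro ⟨w, hw⟩
      refine ⟨fun i => w (Sum.inl i), ?_⟩
      have := (hP (Sum.elim v (fun i => w (Sum.inl i)))).2 ⟨_, hw⟩
      simpa using this

theorem subst {P : (γ → R) → Prop} (hP : DioPred P) {h : γ → (α → R) → R}
    (hh : ∀ i, IsPolyFun (h i)) : DioPred (fun v => P (fun i => h i v)) := by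
  obtain ⟨β, μ, hβ, hμ, f, hf, hP⟩ := hP
  refine ⟨β, μ, hβ, hμ, fun k v w => f k (fun i => h i v) w, fun k => ?_, fun v => hP _⟩
  exact (hf k).comp (h := fun i v => Sum.elim (fun j => h j (fun t => v (Sum.inl t)))
    (fun j => v (Sum.inr j)) i) (by
      rintro (i | i)
      · exact (hh i).comp (fun t => IsPolyFun.proj _)
      · exact IsPolyFun.proj _)

theorem ex {Q : (α → R) → R → Prop}
    (h : DioPred (fun v : Option α → R => Q (fun i => v (some i)) (v none))) :
    DioPred (fun v => ∃ x, Q v x) := by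
  have h2 : DioPred (fun v : α ⊕ Unit → R => Q (fun i => v (Sum.inl i)) (v (Sum.inr ()))) :=
    h.subst (h := fun i v => match i with | some i => v (Sum.inl i) | none => v (Sum.inr ()))
      (by rintro (_ | i) <;> exact IsPolyFun.proj _)
  have := exBlock (γ := Unit) (Q := fun v x => Q v (x ())) h2
  refine this.congr fun v => ⟨fun ⟨x, hx⟩ => ⟨fun _ => x, hx⟩, fun ⟨x, hx⟩ => ⟨x (), hx⟩⟩

theorem dvd {f g : (α → R) → R} (hf : IsPolyFun f) (hg : IsPolyFun g) :
    DioPred (fun v => f v ∣ g v) := by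
  refine DioPred.congr (P := fun v => ∃ x, g v = f v * x) ?_ (fun v => Iff.rfl)
  apply ex
  exact eq (hg.comp fun i => IsPolyFun.proj _) ((hf.comp fun i => IsPolyFun.proj _).mul (.proj _))

theorem of_isDio {E : Set R} (hE : IsDiophantineOver R E) {g : (α → R) → R} (hg : IsPolyFun g) :
    DioPred (fun v => g v ∈ E) := by
  obtain ⟨n, k, f, hf⟩ := hE
  refine ⟨Fin n, Fin k, inferInstance, inferInstance,
    fun k v w => MvPolynomial.eval (Fin.cons (g v) w) (f k), fun k => ?_, fun v => hf _⟩
  refine IsPolyFun.comp (g := fun u => MvPolynomial.eval u (f k)) ⟨f k, fun _ => rfl⟩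
    (h := fun i v => (Fin.cons (g fun i => v (Sum.inl i)) (fun i => v (Sum.inr i)) :
      Fin (n + 1) → R) i) ?_
  intro i
  refine Fin.cases ?_ (fun j => ?_) i
  · simpa using hg.comp (fun i => IsPolyFun.proj _)
  · simpa using IsPolyFun.proj _

theorem isDio {E : Set R} (hE : DioPred (fun v : Unit → R => v () ∈ E)) :
    IsDiophantineOver R E := by
  obtain ⟨β, μ, hβ, hμ, f, hf, hP⟩ := hE
  obtain ⟨n, ⟨eβ⟩⟩ := Finite.exists_equiv_fin β
  obtain ⟨k, ⟨eμ⟩⟩ := Finite.exists_equiv_fin μ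
  choose p hp using hf
  refine ⟨n, k, fun i => MvPolynomial.rename (Sum.elim (fun _ => 0) (fun j => (eβ j).succ))
    (p (eμ.symm i)), fun τ => ?_⟩
  have key : ∀ (a : Fin n → R) i, MvPolynomial.eval (Fin.cons τ a : Fin (n+1) → R)
      (MvPolynomial.rename (Sum.elim (fun _ => 0) (fun j => (eβ j).succ)) (p (eμ.symm i)))
      = f (eμ.symm i) (fun _ => τ) (fun j => a (eβ j)) := by
    intro a i
    rw [MvPolynomial.eval_rename, ← hp]
    simp
  rw [show τ ∈ E ↔ _ from hP (fun _ => τ)]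
  constructor
  · rintro ⟨w, hw⟩
    refine ⟨fun j => w (eβ.symm j), fun i => ?_⟩
    rw [key]; simpa using hw _
  · rintro ⟨a, ha⟩
    refine ⟨fun j => a (eβ j), fun m => ?_⟩
    have := ha (eμ m)
    rw [key] at this; simpa using this
end DioPred

/-- Transitivity along a ring homomorphism with diophantine image. -/
theorem isDio_image {R S : Type} [CommRing R] [CommRing S] (φ : R →+* S)
    (hφ : Function.Injective φ) (him : IsDiophantineOver S (Set.range φ)) {E : Set R}
    (hE : IsDiophantineOver R E) : IsDiophantineOver S (φ '' E) := by
  obtain ⟨n, k, f, hf⟩ := hE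
  have key : ∀ (t : R) (a : Fin n → R) i,
      MvPolynomial.eval (Fin.cons (φ t) (fun j => φ (a j)) : Fin (n+1) → S)
        (MvPolynomial.map φ (f i)) = φ (MvPolynomial.eval (Fin.cons t a : Fin (n+1) → R) (f i)) := by
    intro t a i
    rw [MvPolynomial.eval_map, ← MvPolynomial.eval₂_id, MvPolynomial.eval₂_comp_left]
    congr 1
    funext j
    refine Fin.cases ?_ (fun j => ?_) j <;> simp
  apply DioPred.isDio
  have : DioPred (fun v : Unit → S => ∃ a : Fin n → S, v () ∈ Set.range φ ∧
      (∀ j, a j ∈ Set.range φ) ∧ ∀ i, MvPolynomial.eval (Fin.cons (v ()) a : Fin (n+1) → S)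
        (MvPolynomial.map φ (f i)) = 0) := by
    apply DioPred.exBlock
    refine .and (.of_isDio him (.proj _)) (.and (.all fun j => .of_isDio him (.proj _)) (.all fun i => ?_))
    refine .eq ?_ (.const _)
    refine IsPolyFun.comp (g := fun u => MvPolynomial.eval u (MvPolynomial.map φ (f i)))
      ⟨_, fun _ => rfl⟩ (h := fun i (v : Unit ⊕ Fin n → S) => (Fin.cons (v (Sum.inl ()))
        (fun i => v (Sum.inr i)) : Fin (n + 1) → S) i) ?_
    intro i
    refine Fin.cases ?_ (fun j => ?_) i <;> simpa using IsPolyFun.proj _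
  refine this.congr fun v => ?_
  constructor
  · rintro ⟨t, ht, h⟩
    obtain ⟨a, ha⟩ := (hf t).1 ht
    refine ⟨fun j => φ (a j), ⟨t, h⟩, fun j => ⟨_, rfl⟩, fun i => ?_⟩
    rw [← h, key, ha, map_zero]
  · rintro ⟨a, ⟨t, ht⟩, ha, h⟩
    choose b hb using ha
    refine ⟨t, (hf t).2 ⟨b, fun i => hφ ?_⟩, ht⟩
    rw [← key, map_zero, ← h i, ht]
    simp [hb]

/-- Descent along a module-finite extension with a finite separating family of functionals. -/
theorem isDio_descent {R S : Type} [CommRing R] [CommRing S] [Algebra R S]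
    {m : ℕ} (ω : Fin m → S) (hω : ∀ s : S, ∃ c : Fin m → R, s = ∑ i, c i • ω i)
    {κ : Type} [Finite κ] (φ : κ → S →ₗ[R] R) (hφ : ∀ s, (∀ k, φ k s = 0) → s = 0)
    {E : Set S} (hE : IsDiophantineOver S E) :
    IsDiophantineOver R {r | algebraMap R S r ∈ E} := by
  obtain ⟨n, k, f, hf⟩ := hE
  have lin : ∀ (α : Type) (p : MvPolynomial α S) (ψ : S →ₗ[R] R),
      IsPolyFun (fun v : α → R => ψ (MvPolynomial.eval (fun i => algebraMap R S (v i)) p)) := by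
    intro α p ψ
    simp only [MvPolynomial.eval_eq]
    have : (fun v : α → R => ψ (∑ d ∈ p.support, MvPolynomial.coeff d p *
        ∏ i ∈ d.support, (algebraMap R S (v i)) ^ d i)) =
        fun v => ∑ d ∈ p.support, ψ (MvPolynomial.coeff d p) * MvPolynomial.eval v
          (MvPolynomial.monomial d 1) := by
      funext v
      rw [map_sum]
      refine Finset.sum_congr rfl fun d _ => ?_
      rw [MvPolynomial.eval_monomial, one_mul, Finsupp.prod, mul_comm (ψ _)]
      refine Eq.trans ?_ (ψ.map_smul (∏ a ∈ d.support, v a ^ d a) (MvPolynomial.coeff d p))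
      congr 1
      simp [Algebra.smul_def, mul_comm]
    rw [this]
    exact IsPolyFun.sum _ fun d => .mul (.const _) ⟨_, fun _ => rfl⟩
  apply DioPred.isDio
  -- substitution of generic elements
  let V := Unit ⊕ (Fin n × Fin m)
  let q : Fin (n + 1) → MvPolynomial V S := Fin.cons (MvPolynomial.X (Sum.inl ()))
    (fun j => ∑ i, MvPolynomial.C (ω i) * MvPolynomial.X (Sum.inr (j, i)))
  have hq : ∀ (t : R) (c : Fin n × Fin m → R) (p : MvPolynomial (Fin (n+1)) S),
      MvPolynomial.eval (fun i => algebraMap R S (Sum.elim (fun _ => t) c i : R))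
        (MvPolynomial.bind₁ q p) =
      MvPolynomial.eval (Fin.cons (algebraMap R S t) (fun j => ∑ i, c (j, i) • ω i) :
        Fin (n+1) → S) p := by
    intro t c p
    refine (MvPolynomial.eval₂Hom_bind₁ (RingHom.id S) _ q p).trans ?_
    change MvPolynomial.eval _ p = _
    congr 2
    funext j
    refine Fin.cases ?_ (fun j => ?_) j
    · simp [q]
    · simp [q, Algebra.smul_def, mul_comm]
  have : DioPred (fun v : Unit → R => ∃ c : Fin n × Fin m → R, ∀ l : Fin k × κ,
      φ l.2 (MvPolynomial.eval (fun i => algebraMap R S (Sum.elim v c i : R))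
        (MvPolynomial.bind₁ q (f l.1))) = 0) := by
    apply DioPred.exBlock
    refine .all fun l => .eq ?_ (.const _)
    convert lin V (MvPolynomial.bind₁ q (f l.1)) (φ l.2) using 6 with v i
    rename_i i
    rcases i with i | i <;> rfl
  refine this.congr fun v => ?_
  rw [show (v () ∈ {r | algebraMap R S r ∈ E} ↔ _) from hf _]
  have hv : v = fun _ => v () := rfl
  rw [hv]
  simp only [hq]
  constructor
  · rintro ⟨a, ha⟩
    choose c hc using fun j => hω (a j)
    refine ⟨fun l => c l.1 l.2, fun l => ?_⟩
    simp only [← hc]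
    rw [ha, map_zero]
  · rintro ⟨c, hc⟩
    exact ⟨_, fun i => hφ _ fun k => hc (i, k)⟩

open NumberField in
theorem isDio_fixed
    (H : ∀ (K L : Type) [Field K] [NumberField K] [Field L] [NumberField L]
      [Algebra K L], Module.finrank K L = 2 →
      IsDiophantineOver (NumberField.RingOfIntegers L)
        {x : NumberField.RingOfIntegers L | ∃ y : NumberField.RingOfIntegers K,
          algebraMap K L (algebraMap (NumberField.RingOfIntegers K) K y)
            = algebraMap (NumberField.RingOfIntegers L) L x})
    (N : Type) [Field N] [NumberField N] (σ : N ≃ₐ[ℚ] N) (hσ : ∀ x, σ (σ x) = x) :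
    IsDiophantineOver (𝓞 N) {x : 𝓞 N | σ (x : N) = x} := by
  by_cases h1 : σ = 1
  · subst h1
    refine ⟨0, 0, fun i => 0, fun τ => ?_⟩
    simp
  · have hord : orderOf σ = 2 := by
      apply orderOf_eq_prime _ h1
      ext x; simp [pow_two, hσ]
    let K := IntermediateField.fixedField (Subgroup.zpowers σ)
    have hfin : Module.finrank K N = 2 := by
      rw [IntermediateField.finrank_fixedField_eq_card, Nat.card_zpowers, hord]
    have hK : ∀ x : N, x ∈ K ↔ σ x = x := by
      intro x
      rw [IntermediateField.mem_fixedField_iff]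
      constructor
      · intro h; exact h σ (Subgroup.mem_zpowers σ)
      · intro h f hf
        obtain ⟨k, rfl⟩ := Subgroup.mem_zpowers_iff.1 hf
        have : σ ∈ MulAction.stabilizer (N ≃ₐ[ℚ] N) x := h
        exact Subgroup.zpow_mem _ this k
    convert H K N hfin using 1
    ext x
    simp only [Set.mem_ofPred_eq]
    constructor
    · intro hx
      have hxK := (hK _).2 hx
      have hIntg : IsIntegral ℤ (⟨(x : N), hxK⟩ : K) := by
        have := x.isIntegral_coe
        exact (isIntegral_algHom_iff ((algebraMap K N).toIntAlgHom) (algebraMap K N).injective).1 this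
      exact ⟨⟨_, hIntg⟩, rfl⟩
    · rintro ⟨y, hy⟩
      have hy' : (x : N) = ((y : K) : N) := hy.symm
      rw [hy']
      exact (hK _).1 (y : K).2

open NumberField in
theorem isDio_realSubfield
    (H : ∀ (K L : Type) [Field K] [NumberField K] [Field L] [NumberField L]
      [Algebra K L], Module.finrank K L = 2 →
      IsDiophantineOver (NumberField.RingOfIntegers L)
        {x : NumberField.RingOfIntegers L | ∃ y : NumberField.RingOfIntegers K,
          algebraMap K L (algebraMap (NumberField.RingOfIntegers K) K y)
            = algebraMap (NumberField.RingOfIntegers L) L x})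
    (N : Type) [Field N] [NumberField N] [IsGalois ℚ N] :
    IsDiophantineOver (𝓞 N) (Set.range (algebraMap (𝓞 (maximalRealSubfield N)) (𝓞 N))) := by
  have h1 : ∀ φ : N →+* ℂ, IsDiophantineOver (𝓞 N) {x : 𝓞 N | star (φ (x : N)) = φ x} := by
    intro φ
    obtain ⟨σ, hσ⟩ := ComplexEmbedding.exists_comp_symm_eq_of_comp_eq (k := ℚ) φ
      (ComplexEmbedding.conjugate φ) (by ext; simp)
    have h2 : ∀ x, φ (σ.symm x) = star (φ x) := fun x => RingHom.congr_fun hσ x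
    convert isDio_fixed H N σ.symm (by
      intro x; apply φ.injective; rw [h2, h2, star_star]) using 2
    ext x
    rw [← h2]
    exact ⟨fun h => φ.injective h, fun h => by rw [h]⟩
  apply DioPred.isDio
  refine (DioPred.all (κ := N →+* ℂ) fun φ => DioPred.of_isDio (h1 φ)
    (IsPolyFun.proj (α := Unit) ())).congr fun v => ?_
  constructor
  · rintro ⟨y, hy⟩ φ
    have : ((v ()) : N) = ((y : maximalRealSubfield N) : N) := by rw [← hy]; rfl
    simp only [Set.mem_ofPred_eq, this]
    exact (y : maximalRealSubfield N).2 φ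
  · intro h
    have hxK : ((v ()) : N) ∈ maximalRealSubfield N := fun φ => h φ
    have hIntg : IsIntegral ℤ (⟨((v ()) : N), hxK⟩ : maximalRealSubfield N) := by
      have := (v ()).isIntegral_coe
      exact (isIntegral_algHom_iff ((algebraMap (maximalRealSubfield N) N).toIntAlgHom)
        (algebraMap (maximalRealSubfield N) N).injective).1 this
    refine ⟨⟨_, hIntg⟩, ?_⟩
    apply RingOfIntegers.ext
    rfl

open NumberField in
theorem isDio_int_descent (M N : Type) [Field M] [NumberField M] [Field N] [NumberField N]
    [Algebra M N] (h : IsDiophantineOver (𝓞 N) {x : 𝓞 N | ∃ n : ℤ, (n : 𝓞 N) = x}) :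
    IsDiophantineOver (𝓞 M) {x : 𝓞 M | ∃ n : ℤ, (n : 𝓞 M) = x} := by
  have : Module.Finite (𝓞 M) (𝓞 N) := Module.Finite.of_restrictScalars_finite ℤ _ _
  obtain ⟨m, ω, hω⟩ := Module.Finite.exists_fin (R := 𝓞 M) (M := 𝓞 N)
  have hω' : ∀ s : 𝓞 N, ∃ c : Fin m → 𝓞 M, s = ∑ i, c i • ω i := by
    intro s
    have : s ∈ Submodule.span (𝓞 M) (Set.range ω) := by rw [hω]; trivial
    obtain ⟨c, hc⟩ := (Submodule.mem_span_range_iff_exists_fun _).1 this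
    exact ⟨c, hc.symm⟩
  have := isDio_descent ω hω' (κ := Fin m)
    (fun k => (Algebra.intTrace (𝓞 M) (𝓞 N)).comp (LinearMap.mulLeft (𝓞 M) (ω k))) (by
    intro s hs
    have h1 : ∀ t : 𝓞 N, Algebra.intTrace (𝓞 M) (𝓞 N) (t * s) = 0 := by
      intro t
      obtain ⟨c, rfl⟩ := hω' t
      rw [Finset.sum_mul, map_sum]
      refine Finset.sum_eq_zero fun k _ => ?_
      rw [smul_mul_assoc, map_smul]
      have := hs k
      simp only [LinearMap.comp_apply, LinearMap.mulLeft_apply] at this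
      rw [this, smul_zero]
    have h2 : ∀ t : N, Algebra.trace M N (t * s) = 0 := by
      intro t
      obtain ⟨⟨y, d⟩, hyd⟩ := IsLocalization.surj (Algebra.algebraMapSubmonoid (𝓞 N) (nonZeroDivisors (𝓞 M))) t
      obtain ⟨d, e, he, rfl⟩ := d
      have he0 : (e : M) ≠ 0 := by
        simpa using nonZeroDivisors.ne_zero he
      have h3 := Algebra.algebraMap_intTrace (A := 𝓞 M) (K := M) (L := N) (B := 𝓞 N) (y * s)
      rw [h1, map_zero, map_mul, ← hyd] at h3
      have h4 : t * (algebraMap (𝓞 N) N) (algebraMap (𝓞 M) (𝓞 N) e) * (algebraMap (𝓞 N) N) s =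
        (e : M) • (t * (s : N)) := by
        rw [Algebra.smul_def]
        have : (algebraMap (𝓞 N) N) (algebraMap (𝓞 M) (𝓞 N) e) = algebraMap M N (e : M) := rfl
        rw [this]; ring
      simp only at h3
      rw [h4, map_smul, smul_eq_mul] at h3
      exact (mul_eq_zero.1 h3.symm).resolve_left he0
    have h5 : (s : N) = 0 := (traceForm_nondegenerate M N).2 (s : N) fun t => by
      simpa [Algebra.traceForm_apply] using h2 t
    exact RingOfIntegers.ext (by simpa using h5)) h
  convert this using 1
  ext x
  simp only [Set.mem_ofPred_eq]
  constructor
  · rintro ⟨n, rfl⟩; exact ⟨n, by simp⟩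
  · rintro ⟨n, hn⟩
    refine ⟨n, FaithfulSMul.algebraMap_injective (𝓞 M) (𝓞 N) ?_⟩
    simpa using hn

open NumberField in
theorem reduction
    (H : ∀ (K L : Type) [Field K] [NumberField K] [Field L] [NumberField L]
      [Algebra K L], Module.finrank K L = 2 →
      IsDiophantineOver (NumberField.RingOfIntegers L)
        {x : NumberField.RingOfIntegers L | ∃ y : NumberField.RingOfIntegers K,
          algebraMap K L (algebraMap (NumberField.RingOfIntegers K) K y)
            = algebraMap (NumberField.RingOfIntegers L) L x})
    (HR : ∀ (F : Type) [Field F] [NumberField F] [IsTotallyReal F],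
      IsDiophantineOver (𝓞 F) {x : 𝓞 F | ∃ n : ℤ, (n : 𝓞 F) = x})
    (M : Type) [Field M] [NumberField M] :
    IsDiophantineOver (𝓞 M) {x : 𝓞 M | ∃ n : ℤ, (n : 𝓞 M) = x} := by
  let N := IntermediateField.normalClosure ℚ M (AlgebraicClosure M)
  have : NumberField N := ⟨⟩
  have : IsAlgClosure ℚ (AlgebraicClosure M) := ⟨inferInstance, Algebra.IsAlgebraic.trans ℚ M _⟩
  have : Normal ℚ (AlgebraicClosure M) := IsAlgClosure.normal ℚ _
  have : Normal ℚ N := normalClosure.normal ℚ M _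
  have : IsGalois ℚ N := ⟨⟩
  apply isDio_int_descent M N
  have := isDio_image (algebraMap (𝓞 (maximalRealSubfield N)) (𝓞 N))
    (FaithfulSMul.algebraMap_injective _ _) (isDio_realSubfield H N) (HR (maximalRealSubfield N))
  convert this using 1
  ext x
  simp only [Set.mem_ofPred_eq, Set.mem_image]
  constructor
  · rintro ⟨n, rfl⟩; exact ⟨n, ⟨n, rfl⟩, by simp⟩
  · rintro ⟨_, ⟨n, rfl⟩, rfl⟩; exact ⟨n, by simp⟩

/-- The arithmetic facts about the ring of integers of a totally real field that are used. -/
structure RealSys (R : Type) [CommRing R] (ι : Type) [Fintype ι] where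
  σ : ι → R →+* ℝ
  inj : ∀ i, Function.Injective (σ i)
  norm : ∀ r : R, r ≠ 0 → 1 ≤ ∏ i, |σ i r|
  approx : ∀ (i₀ : ι) (δ : ℝ), 0 < δ → ∃ c : R, (∀ i, i ≠ i₀ → |σ i c| < δ) ∧ 1 ≤ |σ i₀ c|
  fin : ∀ w : R, w ≠ 0 → Finite (R ⧸ Ideal.span {w})
  rank : ∀ γ : ι → R, LinearIndependent ℤ γ → ∀ α : R, ∃ (D : ℤ) (r : ι → ℤ), D ≠ 0 ∧
    (D : R) * α = ∑ i, (r i : R) * γ i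

theorem diag_dom_bound {ι : Type} [Fintype ι] [Nonempty ι] [DecidableEq ι] (G : ι → ι → ℝ) (δ : ℝ) (hδ : 0 < δ)
    (hδ2 : Fintype.card ι * δ ≤ 1 / 2) (hd : ∀ i, 1 ≤ G i i)
    (ho : ∀ i j, i ≠ j → |G i j| ≤ δ) (t : ι → ℝ) (A : ℝ)
    (hy : ∀ i, |∑ j, t j * G i j| ≤ A) : ∀ j, |t j| ≤ 2 * A := by
  obtain ⟨k, hk⟩ := Finite.exists_max (fun j => |t j|)
  have h1 : t k * G k k = ∑ j, t j * G k j - ∑ j ∈ Finset.univ.erase k, t j * G k j := by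
    rw [← Finset.add_sum_erase _ _ (Finset.mem_univ k)]; ring
  have h2 : |∑ j ∈ Finset.univ.erase k, t j * G k j| ≤ Fintype.card ι * δ * |t k| := by
    refine (Finset.abs_sum_le_sum_abs _ _).trans ?_
    calc ∑ j ∈ Finset.univ.erase k, |t j * G k j| ≤ ∑ j ∈ Finset.univ.erase k, |t k| * δ := by
          refine Finset.sum_le_sum fun j hj => ?_
          rw [abs_mul]
          exact mul_le_mul (hk j) (ho k j (Finset.ne_of_mem_erase hj).symm) (abs_nonneg _)
            (abs_nonneg _)
      _ ≤ ∑ j : ι, |t k| * δ := by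
          exact Finset.sum_le_sum_of_subset_of_nonneg (Finset.erase_subset _ _)
            fun _ _ _ => by positivity
      _ = _ := by simp; ring
  have h3 : |t k| ≤ |t k * G k k| := by
    rw [abs_mul]
    have : 1 ≤ |G k k| := (hd k).trans (le_abs_self _)
    nlinarith [abs_nonneg (t k)]
  have h4 : |t k * G k k| ≤ A + Fintype.card ι * δ * |t k| := by
    rw [h1]
    exact (abs_sub _ _).trans (add_le_add (hy k) h2)
  have h5 : |t k| ≤ 2 * A := by nlinarith [abs_nonneg (t k)]
  exact fun j => (hk j).trans h5

namespace RealSys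
variable {R : Type} [CommRing R] {ι : Type} [Fintype ι] (S : RealSys R ι)

theorem exists_sum_sq [Nonempty ι] (α : R) (hα : ∀ i, 0 < S.σ i α) :
    ∃ (D : ℕ) (r : ι → ℕ) (γ : ι → R), 0 < D ∧ (D : R) * α = ∑ i, (r i : R) * γ i ^ 2 := by
  classical
  obtain ⟨k1, hk1⟩ := Finite.exists_max (fun i => S.σ i α)
  obtain ⟨k0, hk0⟩ := Finite.exists_min (fun i => S.σ i α)
  set A := S.σ k1 α with hA
  set m := S.σ k0 α with hm
  have hApos : 0 < A := hα k1
  have hmpos : 0 < m := hα k0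
  have hn : (0 : ℝ) < Fintype.card ι := by exact_mod_cast Fintype.card_pos
  set n : ℝ := (Fintype.card ι : ℝ) with hndef
  obtain ⟨δ, hδ, hδ1, hδ2⟩ : ∃ δ : ℝ, 0 < δ ∧ n * δ ≤ 1 / 2 ∧ n * δ * (2 * A) < m := by
    refine ⟨min (1 / (2 * n)) (m / (4 * n * A)), by positivity, ?_, ?_⟩
    · calc n * min (1 / (2 * n)) (m / (4 * n * A)) ≤ n * (1 / (2 * n)) := by
            gcongr; exact min_le_left _ _
        _ = 1 / 2 := by field_simp
    · calc n * min (1 / (2 * n)) (m / (4 * n * A)) * (2 * A) ≤ n * (m / (4 * n * A)) * (2 * A) := by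
            gcongr; exact min_le_right _ _
        _ = m / 2 := by field_simp; norm_num
        _ < m := by linarith
  choose γ hγ1 hγ2 using fun j => S.approx j (min δ 1) (by positivity)
  let G : ι → ι → ℝ := fun i j => S.σ i (γ j ^ 2)
  have hG : ∀ i j, G i j = |S.σ i (γ j)| ^ 2 := fun i j => by simp [G]
  have hd : ∀ i, 1 ≤ G i i := fun i => by rw [hG]; exact one_le_pow₀ (hγ2 i)
  have hG0 : ∀ i j, 0 ≤ G i j := fun i j => by rw [hG]; positivity
  have ho : ∀ i j, i ≠ j → |G i j| ≤ δ := fun i j hij => by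
    rw [abs_of_nonneg (hG0 i j), hG]
    have h1 := hγ1 j i hij
    have h2 := h1.trans_le (min_le_left _ _)
    have h3 := h1.trans_le (min_le_right _ _)
    nlinarith [abs_nonneg (S.σ i (γ j))]
  have hlin : LinearIndependent ℤ (fun j => γ j ^ 2) := by
    rw [Fintype.linearIndependent_iff]
    intro g hg j
    have := diag_dom_bound G δ hδ hδ1 hd ho (fun j => (g j : ℝ)) 0 (by
      intro i
      have h := congrArg (S.σ i) hg
      rw [map_sum, map_zero] at h
      have h' : ∑ j, (g j : ℝ) * G i j = 0 := by
        rw [← h]; refine Finset.sum_congr rfl fun j _ => by simp [G]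
      rw [h', abs_zero]) j
    have h2 : |(g j : ℝ)| = 0 := le_antisymm (by simpa using this) (abs_nonneg _)
    exact_mod_cast abs_eq_zero.1 h2
  obtain ⟨D, r, hD, hr⟩ := S.rank _ hlin α
  have hDR : (D : ℝ) ≠ 0 := by exact_mod_cast hD
  have hsum : ∀ i, ∑ j, ((r j : ℝ) / D) * G i j = S.σ i α := by
    intro i
    have h := congrArg (S.σ i) hr
    rw [map_sum, map_mul, map_intCast] at h
    have h' : ∑ j, ((r j : ℝ) / D) * G i j = (∑ j, (r j : ℝ) * G i j) / D := by
      rw [Finset.sum_div]; refine Finset.sum_congr rfl fun j _ => by ring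
    rw [h', div_eq_iff hDR, mul_comm (S.σ i α), h]
    refine Finset.sum_congr rfl fun j _ => by simp [G]
  have hb := diag_dom_bound G δ hδ hδ1 hd ho (fun j => (r j : ℝ) / D) A (by
    intro i; rw [hsum, abs_of_pos (hα i)]; exact hk1 i)
  have hpos : ∀ j, 0 < (r j : ℝ) / D := by
    intro j
    have h1 : (r j : ℝ) / D * G j j = S.σ j α - ∑ i ∈ Finset.univ.erase j, (r i : ℝ) / D * G j i := by
      rw [← hsum j, ← Finset.add_sum_erase _ _ (Finset.mem_univ j)]; ring
    have h2 : ∑ i ∈ Finset.univ.erase j, (r i : ℝ) / D * G j i ≤ n * δ * (2 * A) := by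
      calc ∑ i ∈ Finset.univ.erase j, (r i : ℝ) / D * G j i
          ≤ ∑ i ∈ Finset.univ.erase j, (2 * A) * δ := by
            refine Finset.sum_le_sum fun i hi => ?_
            refine (le_abs_self _).trans ?_
            rw [abs_mul]
            exact mul_le_mul (hb i) (ho j i (Finset.ne_of_mem_erase hi).symm) (abs_nonneg _)
              (by positivity)
        _ ≤ ∑ i : ι, (2 * A) * δ :=
            Finset.sum_le_sum_of_subset_of_nonneg (Finset.erase_subset _ _)
              fun _ _ _ => by positivity
        _ = _ := by simp [hndef]; ring
    have h3 : 0 < (r j : ℝ) / D * G j j := by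
      rw [h1]; have : m ≤ S.σ j α := hk0 j; linarith
    exact pos_of_mul_pos_left h3 (hG0 j j)
  have hsign : ∀ j, 0 < r j * D := by
    intro j
    have h1 := hpos j
    have h2 : (r j : ℝ) * D = (r j : ℝ) / D * (D * D) := by field_simp
    have h3 : (0 : ℝ) < (r j : ℝ) * D := by
      rw [h2]; exact mul_pos h1 (mul_self_pos.2 hDR)
    exact_mod_cast h3
  refine ⟨(D * D).toNat, fun j => (r j * D).toNat, γ, ?_, ?_⟩
  · have : 0 < D * D := mul_self_pos.2 hD
    omega
  · have e1 : (((D * D).toNat : ℕ) : R) = (D : R) * D := by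
      rw [← Int.cast_natCast, Int.toNat_of_nonneg (mul_self_nonneg D)]; push_cast; ring
    have e2 : ∀ j, (((r j * D).toNat : ℕ) : R) = (r j : R) * D := fun j => by
      rw [← Int.cast_natCast, Int.toNat_of_nonneg (hsign j).le]; push_cast; ring
    simp only [e1, e2]
    rw [mul_assoc, hr, Finset.mul_sum]
    refine Finset.sum_congr rfl fun j _ => by ring

/-- The diophantine condition for total positivity. -/
def TP (_ : RealSys R ι) (α : R) : Prop :=
  ∃ (e : Fin 4 → R) (f : ι × Fin 4 → R), (1 + ∑ i, e i ^ 2) * α = ∑ i, f i ^ 2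

theorem TP.nonneg {S : RealSys R ι} {α : R} (h : S.TP α) (i : ι) : 0 ≤ S.σ i α := by
  obtain ⟨e, f, h⟩ := h
  have h1 := congrArg (S.σ i) h
  simp only [map_mul, map_add, map_sum, map_one, map_pow] at h1
  have h2 : 0 < 1 + ∑ k, (S.σ i (e k)) ^ 2 := by positivity
  have h3 : 0 ≤ ∑ k, (S.σ i (f k)) ^ 2 := by positivity
  rw [← h1] at h3
  exact nonneg_of_mul_nonneg_right h3 h2

theorem TP.of_pos [Nonempty ι] {α : R} (hα : ∀ i, 0 < S.σ i α) : S.TP α := by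
  obtain ⟨D, r, γ, hD, h⟩ := S.exists_sum_sq α hα
  obtain ⟨a, b, c, d, h4⟩ := Nat.sum_four_squares (D - 1)
  choose a' b' c' d' h4' using fun i => Nat.sum_four_squares (r i)
  refine ⟨![a, b, c, d], fun p => ((![a' p.1, b' p.1, c' p.1, d' p.1] p.2 : ℕ) : R) * γ p.1, ?_⟩
  have hD' : (D : R) = 1 + ∑ i, (![(a : R), b, c, d] i) ^ 2 := by
    have : D = 1 + (a ^ 2 + b ^ 2 + c ^ 2 + d ^ 2) := by omega
    rw [this]; simp [Fin.sum_univ_four]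
  rw [← hD', h, Fintype.sum_prod_type]
  refine Finset.sum_congr rfl fun i _ => ?_
  rw [← h4' i]
  simp [Fin.sum_univ_four]
  ring

theorem TP.dio {α : Type} {g : (α → R) → R} (hg : IsPolyFun g) : DioPred (fun v => S.TP (g v)) := by
  apply DioPred.exBlock
  apply DioPred.exBlock
  refine .eq (.mul (.add (.const _) (.sum _ fun k => .pow (.proj _) _))
    (hg.comp fun i => .proj _)) (.sum _ fun k => .pow (.proj _) _)

end RealSys

/-- The Pell sequences attached to `a`, expressed through Chebyshev polynomials. -/
noncomputable def pX {R : Type} [CommRing R] (a : R) (k : ℤ) : R := (Polynomial.Chebyshev.T R k).eval a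
/-- The second Pell sequence. -/
noncomputable def pY {R : Type} [CommRing R] (a : R) (k : ℤ) : R := (Polynomial.Chebyshev.U R (k - 1)).eval a

section pell
variable {R : Type} [CommRing R] (a : R)

@[simp] theorem pX_zero : pX a 0 = 1 := by simp [pX]
@[simp] theorem pX_one : pX a 1 = a := by simp [pX]
@[simp] theorem pY_zero : pY a 0 = 0 := by simp [pY]
@[simp] theorem pY_one : pY a 1 = 1 := by simp [pY]

theorem pX_neg (k : ℤ) : pX a (-k) = pX a k := by simp [pX]
theorem pY_neg (k : ℤ) : pY a (-k) = - pY a k := by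
  simp [pY, Polynomial.Chebyshev.U_neg_sub_one]

theorem pY_succ (k : ℤ) : pY a (k + 1) = pX a k + a * pY a k := by
  have h := congrArg (Polynomial.eval a) (Polynomial.Chebyshev.U_eq_X_mul_U_add_T R (k - 1))
  simp only [sub_add_cancel, Polynomial.eval_add, Polynomial.eval_mul, Polynomial.eval_X] at h
  simp only [pX, pY, add_sub_cancel_right]
  rw [h]; ring

theorem pX_succ (k : ℤ) : pX a (k + 1) = a * pX a k + (a ^ 2 - 1) * pY a k := by
  have h := congrArg (Polynomial.eval a) (Polynomial.Chebyshev.T_eq_X_mul_T_sub_pol_U R (k - 1))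
  rw [show k - 1 + 2 = k + 1 by ring] at h
  simp only [sub_add_cancel, Polynomial.eval_sub, Polynomial.eval_mul, Polynomial.eval_X,
    Polynomial.eval_one, Polynomial.eval_pow] at h
  simp only [pX, pY]
  rw [h]; ring

theorem pX_pred (k : ℤ) : pX a (k - 1) = a * pX a k - (a ^ 2 - 1) * pY a k := by
  have h1 := pX_succ a (k - 1)
  have h2 := pY_succ a (k - 1)
  rw [sub_add_cancel] at h1 h2
  rw [h1, h2]; ring

theorem pY_pred (k : ℤ) : pY a (k - 1) = a * pY a k - pX a k := by
  have h1 := pX_succ a (k - 1)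
  have h2 := pY_succ a (k - 1)
  rw [sub_add_cancel] at h1 h2
  rw [h1, h2]; ring

theorem p_add (k l : ℤ) : pX a (k + l) = pX a k * pX a l + (a ^ 2 - 1) * (pY a k * pY a l) ∧
    pY a (k + l) = pX a k * pY a l + pY a k * pX a l := by
  induction l using Int.induction_on with
  | zero => simp
  | succ l ih =>
    rw [← add_assoc, pX_succ a (k + l), pY_succ a (k + l), ih.1, ih.2, pX_succ, pY_succ]
    constructor <;> ring
  | pred l ih =>
    rw [← add_sub_assoc, pX_pred a (k + -l), pY_pred a (k + -l), ih.1, ih.2, pX_pred, pY_pred]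
    constructor <;> ring

theorem pX_add (k l : ℤ) : pX a (k + l) = pX a k * pX a l + (a ^ 2 - 1) * (pY a k * pY a l) :=
  (p_add a k l).1
theorem pY_add (k l : ℤ) : pY a (k + l) = pX a k * pY a l + pY a k * pX a l := (p_add a k l).2

theorem p_pell (k : ℤ) : pX a k ^ 2 - (a ^ 2 - 1) * pY a k ^ 2 = 1 := by
  have h := pX_add a k (-k)
  rw [add_neg_cancel, pX_zero, pX_neg, pY_neg] at h
  linear_combination -h

theorem pX_sub (k l : ℤ) : pX a (k - l) = pX a k * pX a l - (a ^ 2 - 1) * (pY a k * pY a l) := by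
  rw [sub_eq_add_neg, pX_add, pX_neg, pY_neg]; ring
theorem pY_sub (k l : ℤ) : pY a (k - l) = pY a k * pX a l - pX a k * pY a l := by
  rw [sub_eq_add_neg, pY_add, pX_neg, pY_neg]; ring

theorem pX_add_two_mul (k m : ℤ) : pX a (k + 2 * m) + pX a k = 2 * pX a (k + m) * pX a m := by
  have h1 : pX a (k + 2 * m) = pX a ((k + m) + m) := by congr 1; ring
  have h2 : pX a k = pX a ((k + m) - m) := by congr 1; ring
  rw [h1, h2, pX_add, pX_sub]
  ring

theorem pX_congr {a b c : R} (h : c ∣ a - b) (k : ℤ) : c ∣ pX a k - pX b k :=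
  h.trans (Polynomial.sub_dvd_eval_sub _ _ _)
theorem pY_congr {a b c : R} (h : c ∣ a - b) (k : ℤ) : c ∣ pY a k - pY b k :=
  h.trans (Polynomial.sub_dvd_eval_sub _ _ _)
theorem pY_at_one (k : ℤ) : pY (1 : R) k = k := by simp [pY]

theorem p_map {S : Type} [CommRing S] (f : R →+* S) (k : ℤ) :
    f (pX a k) = pX (f a) k ∧ f (pY a k) = pY (f a) k := by
  constructor
  · rw [pX, pX, ← Polynomial.Chebyshev.map_T f, Polynomial.eval_map, Polynomial.eval₂_hom]
  · rw [pY, pY, ← Polynomial.Chebyshev.map_U f, Polynomial.eval_map, Polynomial.eval₂_hom]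

theorem pX_map {S : Type} [CommRing S] (f : R →+* S) (k : ℤ) : f (pX a k) = pX (f a) k :=
  (p_map a f k).1
theorem pY_map {S : Type} [CommRing S] (f : R →+* S) (k : ℤ) : f (pY a k) = pY (f a) k :=
  (p_map a f k).2

theorem p_mul (k l : ℤ) : pX a (k * l) = pX (pX a k) l ∧ pY a (k * l) = pY a k * pY (pX a k) l := by
  have hp := p_pell a k
  have hp' : (a ^ 2 - 1) * pY a k ^ 2 = pX a k ^ 2 - 1 := by
    linear_combination -hp
  induction l using Int.induction_on with
  | zero => simp
  | succ l ih =>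
    rw [mul_add, mul_one, pX_add, pY_add, ih.1, ih.2, pX_succ, pY_succ, ← hp']
    constructor <;> ring
  | pred l ih =>
    rw [mul_sub, mul_one, pX_sub, pY_sub, ih.1, ih.2, pX_pred, pY_pred, ← hp']
    constructor <;> ring

theorem pX_mul (k l : ℤ) : pX a (k * l) = pX (pX a k) l := (p_mul a k l).1
theorem pY_mul (k l : ℤ) : pY a (k * l) = pY a k * pY (pX a k) l := (p_mul a k l).2

theorem pY_dvd_mul (k l : ℤ) : pY a k ∣ pY a (k * l) := ⟨_, pY_mul a k l⟩

theorem p_coprime (k : ℤ) : IsCoprime (pX a k) (pY a k) :=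
  ⟨pX a k, - (a ^ 2 - 1) * pY a k, by linear_combination p_pell a k⟩

theorem pY_approx (l : ℕ) : (a ^ 2 - 1) ∣ pX a l - a ^ l ∧
    (a ^ 2 - 1) ∣ a * pY a l - l * a ^ l := by
  induction l with
  | zero => simp
  | succ l ih =>
    obtain ⟨⟨c, hc⟩, e, he⟩ := ih
    rw [sub_eq_iff_eq_add] at hc he
    push_cast
    rw [pX_succ, pY_succ]
    exact ⟨⟨a * c + pY a l, by linear_combination a * hc⟩,
      ⟨a * c + a * e, by linear_combination a * hc + a * he⟩⟩

/-- Divisibility of indices. -/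
theorem pY_sq_dvd (h m : ℤ) [IsDomain R] (hm : pY a m ≠ 0) (hd : pY a h ^ 2 ∣ pY a m) :
    pY a h ∣ (m : R) := by
  have hd1 : pY a h ∣ pY a m := (Dvd.intro_left _ (by ring)).trans hd
  set g : ℤ := (Int.gcd h m : ℤ)
  have hg : pY a h ∣ pY a g := by
    have : (g : ℤ) = h * Int.gcdA h m + m * Int.gcdB h m := Int.gcd_eq_gcd_ab h m
    rw [this, pY_add]
    refine dvd_add ?_ ?_
    · exact Dvd.dvd.mul_left (hd1.trans (pY_dvd_mul _ _ _)) _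
    · exact Dvd.dvd.mul_right (pY_dvd_mul _ _ _) _
  obtain ⟨h', hh'⟩ : g ∣ h := Int.gcd_dvd_left _ _
  obtain ⟨l, hl⟩ : g ∣ m := Int.gcd_dvd_right _ _
  have hg2 : pY a g ∣ pY a h := by rw [hh']; exact pY_dvd_mul _ _ _
  have h1 : pY a g ^ 2 ∣ pY a m := (pow_dvd_pow_of_dvd hg2 2).trans hd
  have hg0 : pY a g ≠ 0 := by
    intro h0; rw [hl, pY_mul, h0, zero_mul] at hm; exact hm rfl
  rw [hl, pY_mul, sq, mul_dvd_mul_iff_left hg0] at h1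
  refine hg.trans ?_
  have key : ∀ n : ℕ, pY a g ∣ pY (pX a g) n → pY a g ∣ (n : R) := by
    intro n hn
    have h2 := (pY_approx (pX a g) n).2
    have h3 : pY a g ∣ pX a g ^ 2 - 1 := ⟨(a ^ 2 - 1) * pY a g, by
      linear_combination p_pell a g⟩
    have h4 : pY a g ∣ (n : R) * pX a g ^ n := by
      have := (hn.mul_left (pX a g)).sub (h3.trans h2)
      rwa [sub_sub_cancel] at this
    exact (IsCoprime.pow_right (p_coprime a g).symm).dvd_of_dvd_mul_right h4
  have h5 : pY a g ∣ (l : R) := by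
    obtain ⟨n, rfl | rfl⟩ := l.eq_nat_or_neg
    · exact_mod_cast key n h1
    · rw [pY_neg, dvd_neg] at h1
      have := key n h1
      push_cast
      rwa [dvd_neg]
  rw [hl]; push_cast
  exact h5.mul_left _
end pell

section realpell

theorem pX_ge_pow {A : ℝ} (hA : 1 ≤ A) (k : ℕ) : A ^ k ≤ pX A k ∧ (k : ℝ) ≤ pY A k := by
  induction k with
  | zero => simp
  | succ k ih =>
    obtain ⟨h1, h2⟩ := ih
    have h3 : (0 : ℝ) ≤ k := Nat.cast_nonneg k
    have h4 : 1 ≤ A ^ k := one_le_pow₀ hA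
    push_cast
    rw [pX_succ, pY_succ, pow_succ']
    constructor
    · have : 0 ≤ (A ^ 2 - 1) * pY A k := mul_nonneg (by nlinarith) (by linarith)
      nlinarith
    · nlinarith

theorem pX_step {A : ℝ} (hA : 1 ≤ A) (k : ℕ) : A * pX A k ≤ pX A (k + 1 : ℕ) := by
  push_cast
  rw [pX_succ]
  have h3 : (0 : ℝ) ≤ k := Nat.cast_nonneg k
  have : 0 ≤ (A ^ 2 - 1) * pY A k := mul_nonneg (by nlinarith) (h3.trans (pX_ge_pow hA k).2)
  linarith

theorem pX_strictMono {A : ℝ} (hA : 1 < A) : StrictMono (fun k : ℕ => pX A k) := by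
  refine strictMono_nat_of_lt_succ fun k => ?_
  have h1 := pX_step hA.le k
  have h2 := (pX_ge_pow hA.le k).1
  have h3 : 1 ≤ A ^ k := one_le_pow₀ hA.le
  change pX A k < pX A (k + 1 : ℕ)
  nlinarith

theorem pX_natAbs {R : Type} [CommRing R] (a : R) (k : ℤ) : pX a (k.natAbs : ℤ) = pX a k := by
  obtain h | h := k.natAbs_eq
  · rw [← h]
  · conv_rhs => rw [h]
    rw [pX_neg]

theorem pX_one_le {A : ℝ} (hA : 1 ≤ A) (k : ℤ) : 1 ≤ pX A k := by
  rw [← pX_natAbs]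
  exact (one_le_pow₀ hA).trans (pX_ge_pow hA _).1

theorem natAbs_lt_pX {A : ℝ} (hA : 2 ≤ A) (k : ℤ) : |(k : ℝ)| < pX A k := by
  rw [← pX_natAbs]
  have h1 : |(k : ℝ)| = (k.natAbs : ℝ) := by rw [Nat.cast_natAbs]; push_cast; rfl
  rw [h1]
  refine lt_of_lt_of_le ?_ (pX_ge_pow (by linarith) _).1
  calc (k.natAbs : ℝ) < (2 : ℝ) ^ k.natAbs := by exact_mod_cast Nat.lt_two_pow_self
    _ ≤ _ := by gcongr

theorem pY_ne_zero_real {A : ℝ} (hA : 1 ≤ A) (k : ℤ) (hk : k ≠ 0) : pY A k ≠ 0 := by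
  have key : ∀ n : ℕ, n ≠ 0 → pY A n ≠ 0 := by
    intro n hn
    have h1 := (pX_ge_pow hA n).2
    have h2 : (0 : ℝ) < n := by positivity
    linarith
  obtain ⟨n, rfl | rfl⟩ := k.eq_nat_or_neg
  · exact key n (by simpa using hk)
  · rw [pY_neg, neg_ne_zero]; exact key n (by simpa using hk)

theorem p_zpow {A s : ℝ} (hs : s ^ 2 = A ^ 2 - 1) (hE : A + s ≠ 0) (k : ℤ) :
    pX A k + s * pY A k = (A + s) ^ k := by
  induction k using Int.induction_on with
  | zero => simp
  | succ k ih =>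
    rw [zpow_add_one₀ hE, ← ih, pX_succ, pY_succ]
    linear_combination (-pY A k) * hs
  | pred k ih =>
    rw [zpow_sub_one₀ hE, ← ih, pX_pred, pY_pred, eq_mul_inv_iff_mul_eq₀ hE]
    linear_combination (A * pY A (-k) - pX A (-k)) * hs

theorem pell_small {b x y c : ℝ} (h : x ^ 2 - (b ^ 2 - 1) * y ^ 2 = 1) (hb : |b| ≤ c) (hc : c < 1) :
    |x| ≤ 1 ∧ (1 - c ^ 2) * y ^ 2 ≤ 1 := by
  have h1 : b ^ 2 ≤ c ^ 2 := by rw [← sq_abs b]; gcongr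
  have h0 : 0 ≤ c := (abs_nonneg b).trans hb
  have h2 : c ^ 2 < 1 := by nlinarith
  constructor
  · rw [← sq_le_one_iff_abs_le_one]; nlinarith [sq_nonneg y]
  · nlinarith [sq_nonneg y, sq_nonneg x]

end realpell

set_option linter.unusedSectionVars false
namespace RealSys
variable {R : Type} [CommRing R] {ι : Type} [Fintype ι] [DecidableEq ι] (S : RealSys R ι)

theorem norm_bound (i₀ : ι) {r : R} (hr : r ≠ 0) {c : ℝ} (h : ∀ i, i ≠ i₀ → |S.σ i r| ≤ c) :
    1 ≤ |S.σ i₀ r| * c ^ (Fintype.card ι - 1) := by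
  refine (S.norm r hr).trans ?_
  rw [← Finset.mul_prod_erase _ _ (Finset.mem_univ i₀)]
  refine mul_le_mul_of_nonneg_left ?_ (abs_nonneg _)
  have := Finset.prod_le_prod (s := Finset.univ.erase i₀) (f := fun i => |S.σ i r|)
    (g := fun _ => c) (fun _ _ => abs_nonneg _) (fun i hi => h i (Finset.ne_of_mem_erase hi))
  simpa [Finset.card_erase_of_mem] using this

theorem norm_dvd {w r : R} (hr : r ≠ 0) (h : w ∣ r) : ∏ i, |S.σ i w| ≤ ∏ i, |S.σ i r| := by
  obtain ⟨c, rfl⟩ := h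
  have hc : c ≠ 0 := fun h => hr (by rw [h, mul_zero])
  simp only [map_mul, abs_mul, Finset.prod_mul_distrib]
  exact le_mul_of_one_le_right (Finset.prod_nonneg fun _ _ => abs_nonneg _) (S.norm c hc)

theorem norm_split (i₀ : ι) (r : R) :
    ∏ i, |S.σ i r| = |S.σ i₀ r| * ∏ i ∈ Finset.univ.erase i₀, |S.σ i r| := by
  rw [Finset.mul_prod_erase _ (fun i => |S.σ i r|) (Finset.mem_univ i₀)]

theorem pell_map (i : ι) {b x y : R} (h : x ^ 2 - (b ^ 2 - 1) * y ^ 2 = 1) :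
    (S.σ i x) ^ 2 - ((S.σ i b) ^ 2 - 1) * (S.σ i y) ^ 2 = 1 := by
  have := congrArg (S.σ i) h
  simpa using this

theorem rank_one_pos (i₀ : ι) [IsDomain R] (hn : 2 ≤ Fintype.card ι) {b x y : R}
    (hb : b ≠ 0) (hpos : 0 < S.σ i₀ b)
    (hbi : ∀ i, i ≠ i₀ → |S.σ i b| ≤ 1 / 4) (h : x ^ 2 - (b ^ 2 - 1) * y ^ 2 = 1) :
    ∃ k : ℤ, (x = pX b k ∧ y = pY b k) ∨ (x = - pX b k ∧ y = - pY b k) := by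
  set B := S.σ i₀ b with hB
  set N := Fintype.card ι - 1 with hN
  have hN1 : 1 ≤ N := by omega
  have hBbig : (4 : ℝ) ^ N ≤ B := by
    have h1 := S.norm_bound i₀ hb hbi
    rw [← hB, abs_of_pos hpos, ← hN, one_div, inv_pow, ← div_eq_mul_inv, le_div_iff₀ (by positivity),
      one_mul] at h1
    exact h1
  have hB4 : 4 ≤ B := by
    calc (4 : ℝ) = 4 ^ 1 := by norm_num
      _ ≤ 4 ^ N := pow_le_pow_right₀ (by norm_num) hN1
      _ ≤ B := hBbig
  set s := √(B ^ 2 - 1) with hs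
  have hs2 : s ^ 2 = B ^ 2 - 1 := Real.sq_sqrt (by nlinarith)
  have hs0 : 0 < s := Real.sqrt_pos.2 (by nlinarith)
  have hsB : s ≤ B := by nlinarith
  set E := B + s with hE
  have hE1 : 1 < E := by linarith
  have hE0 : 0 < E := by linarith
  -- the case of a positive value at the distinguished place
  have main : ∀ x y : R, x ^ 2 - (b ^ 2 - 1) * y ^ 2 = 1 → 0 < S.σ i₀ x + s * S.σ i₀ y →
      ∃ k : ℤ, (x = pX b k ∧ y = pY b k) ∨ (x = - pX b k ∧ y = - pY b k) := by
    intro x y h hu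
    set u := S.σ i₀ x + s * S.σ i₀ y with hu'
    obtain ⟨k, hk1, hk2⟩ := exists_mem_Ico_zpow (mul_pos hu (Real.sqrt_pos.2 hE0)) hE1
    refine ⟨k, ?_⟩
    have hp := p_pell b k
    have hpe := S.pell_map i₀ h
    rw [← hB] at hpe
    set x' := x * pX b k - (b ^ 2 - 1) * (y * pY b k) with hx'
    set y' := y * pX b k - x * pY b k with hy'
    have hpell' : x' ^ 2 - (b ^ 2 - 1) * y' ^ 2 = 1 := by
      calc x' ^ 2 - (b ^ 2 - 1) * y' ^ 2 = (x ^ 2 - (b ^ 2 - 1) * y ^ 2) *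
            (pX b k ^ 2 - (b ^ 2 - 1) * pY b k ^ 2) := by rw [hx', hy']; ring
        _ = 1 := by rw [h, hp, one_mul]
    have hz := p_zpow (A := B) hs2 hE0.ne' k
    have hz' := p_zpow (A := B) hs2 hE0.ne' (-k)
    rw [pX_neg, pY_neg, zpow_neg, ← hE] at hz'
    rw [← hE] at hz
    have hEk : 0 < E ^ k := zpow_pos hE0 k
    set u' := u * (E ^ k)⁻¹ with hu''
    have hu'0 : 0 < u' := by positivity
    have e1 : S.σ i₀ x' + s * S.σ i₀ y' = u' := by
      rw [hx', hy', hu'', ← hz', hu']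
      simp only [map_sub, map_mul, map_pow, map_one, pX_map, pY_map, ← hB]
      linear_combination (S.σ i₀ y * pY B k) * hs2
    have hpe' := S.pell_map i₀ hpell'
    rw [← hB] at hpe'
    have e2 : S.σ i₀ x' - s * S.σ i₀ y' = u'⁻¹ := by
      refine eq_inv_of_mul_eq_one_left ?_
      rw [← e1]
      linear_combination hpe' - (S.σ i₀ y') ^ 2 * hs2
    have hsq : 0 < √E := Real.sqrt_pos.2 hE0
    have hsqE : √E ^ 2 = E := Real.sq_sqrt hE0.le
    have b1 : u' ≤ √E := by
      rw [zpow_add_one₀ hE0.ne'] at hk2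
      rw [hu'', ← div_eq_mul_inv, div_le_iff₀ hEk]
      nlinarith
    have b2 : u'⁻¹ ≤ √E := by
      rw [hu'', mul_inv, inv_inv, inv_mul_le_iff₀ hu]
      exact hk1
    have hu'i : 0 < u'⁻¹ := inv_pos.2 hu'0
    have b3 : 4 * (B ^ 2 - 1) * (S.σ i₀ y') ^ 2 ≤ E := by
      have e3 : 4 * (B ^ 2 - 1) * (S.σ i₀ y') ^ 2 = (u' - u'⁻¹) ^ 2 := by
        rw [← e2, ← e1, ← hs2]
        ring
      rw [e3, ← hsqE]
      apply sq_le_sq'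
      · linarith
      · linarith
    have hy0 : y' = 0 := by
      by_contra hne
      have h1 := S.norm_bound i₀ (r := y' ^ 2) (pow_ne_zero 2 hne) (c := 16 / 15) (by
        intro i hi
        have := (pell_small (S.pell_map i hpell') (hbi i hi) (by norm_num)).2
        rw [map_pow, abs_of_nonneg (sq_nonneg _)]
        linarith)
      rw [← hN, map_pow, abs_of_nonneg (sq_nonneg _)] at h1
      set Y := (S.σ i₀ y') ^ 2 with hY
      have hY0 : 0 ≤ Y := sq_nonneg _
      have h2 : Y * B ≤ 8 / 15 := by nlinarith
      have h3 : (16 / 15 : ℝ) ^ N ≤ B := (pow_le_pow_left₀ (by norm_num) (by norm_num) N).trans hBbig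
      nlinarith
    rw [hy0] at hpell'
    have hx1 : x' ^ 2 = 1 := by linear_combination hpell'
    have ex : x = x' * pX b k := by
      linear_combination (-x) * hp - pX b k * hx' + (b ^ 2 - 1) * pY b k * (hy0 - hy')
    have ey : y = x' * pY b k := by
      linear_combination (-y) * hp - pY b k * hx' + pX b k * (hy0 - hy')
    rcases mul_self_eq_one_iff.1 (show x' * x' = 1 by rw [← sq]; exact hx1) with h1 | h1
    · left; rw [ex, ey, h1]; simp
    · right; rw [ex, ey, h1]; simp
  have hpe := S.pell_map i₀ h
  rw [← hB] at hpe
  have hne : S.σ i₀ x + s * S.σ i₀ y ≠ 0 := by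
    intro h0
    have : (S.σ i₀ x + s * S.σ i₀ y) * (S.σ i₀ x - s * S.σ i₀ y) = 1 := by
      linear_combination hpe - (S.σ i₀ y) ^ 2 * hs2
    rw [h0, zero_mul] at this
    exact zero_ne_one this
  rcases lt_or_gt_of_ne hne with hlt | hgt
  · obtain ⟨k, hk⟩ := main (-x) (-y) (by linear_combination h) (by simp; linarith)
    refine ⟨k, ?_⟩
    rcases hk with ⟨h1, h2⟩ | ⟨h1, h2⟩
    · right; exact ⟨by rw [← h1, neg_neg], by rw [← h2, neg_neg]⟩
    · left; exact ⟨neg_injective h1, neg_injective h2⟩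
  · exact main x y h hgt

theorem p_neg_arg {R : Type} [CommRing R] (b : R) (k : ℤ) :
    (pX (-b) k = pX b k ∧ pY (-b) k = - pY b k) ∨ (pX (-b) k = - pX b k ∧ pY (-b) k = pY b k) := by
  induction k using Int.induction_on with
  | zero => simp
  | succ k ih =>
    rw [pX_succ, pY_succ, pX_succ, pY_succ]
    rcases ih with ⟨h1, h2⟩ | ⟨h1, h2⟩
    · right; rw [h1, h2]; constructor <;> ring
    · left; rw [h1, h2]; constructor <;> ring
  | pred k ih =>
    rw [pX_pred, pY_pred, pX_pred, pY_pred]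
    rcases ih with ⟨h1, h2⟩ | ⟨h1, h2⟩
    · right; rw [h1, h2]; constructor <;> ring
    · left; rw [h1, h2]; constructor <;> ring

/-- Solutions of the Pell equation: rank one situation. -/
theorem rank_one (i₀ : ι) [IsDomain R] (hn : 2 ≤ Fintype.card ι) {b x y : R}
    (hb : b ≠ 0) (hbi : ∀ i, i ≠ i₀ → |S.σ i b| ≤ 1 / 4) (h : x ^ 2 - (b ^ 2 - 1) * y ^ 2 = 1) :
    ∃ k : ℤ, (x = pX b k ∨ x = - pX b k) ∧ (y = pY b k ∨ y = - pY b k) := by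
  have hne : S.σ i₀ b ≠ 0 := fun h0 => hb (S.inj i₀ (by rw [h0, map_zero]))
  rcases lt_or_gt_of_ne hne with hlt | hgt
  · obtain ⟨k, hk⟩ := S.rank_one_pos i₀ hn (b := -b) (x := x) (y := y) (by simpa using hb)
      (by simpa using hlt) (by simpa using hbi) (by linear_combination h)
    refine ⟨k, ?_⟩
    rcases p_neg_arg b k with ⟨h1, h2⟩ | ⟨h1, h2⟩ <;> rw [h1, h2] at hk <;> simp only [neg_neg] at hk <;>
      tauto
  · obtain ⟨k, hk⟩ := S.rank_one_pos i₀ hn hb hgt hbi h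
    exact ⟨k, by tauto⟩
end RealSys

namespace RealSys
variable {R : Type} [CommRing R] {ι : Type} [Fintype ι] [DecidableEq ι] (S : RealSys R ι)

/-- The base element of the Pell equation. -/
structure Good (i₀ : ι) (a : R) : Prop where
  small : ∀ i, i ≠ i₀ → |S.σ i a| ≤ 1 / 8
  big : (4 : ℝ) ^ Fintype.card ι < S.σ i₀ a

variable {S} {i₀ : ι} {a : R}

theorem Good.four (h : S.Good i₀ a) (hn : 2 ≤ Fintype.card ι) : 4 ≤ S.σ i₀ a := by
  calc (4 : ℝ) = 4 ^ 1 := by norm_num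
    _ ≤ 4 ^ Fintype.card ι := pow_le_pow_right₀ (by norm_num) (by omega)
    _ ≤ _ := h.big.le

theorem Good.pX_small (h : S.Good i₀ a) (k : ℤ) {i : ι} (hi : i ≠ i₀) : |S.σ i (pX a k)| ≤ 1 :=
  (pell_small (S.pell_map i (p_pell a k)) (h.small i hi) (by norm_num)).1

theorem Good.pY_small (h : S.Good i₀ a) (k : ℤ) {i : ι} (hi : i ≠ i₀) : |S.σ i (pY a k)| ≤ 2 := by
  have := (pell_small (S.pell_map i (p_pell a k)) (h.small i hi) (by norm_num)).2
  apply abs_le_of_sq_le_sq _ (by norm_num)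
  nlinarith

theorem Good.small_zero (h : S.Good i₀ a) (hn : 2 ≤ Fintype.card ι) {m : ℕ} {u r : R}
    (hu : u = pX a (m + 1 : ℕ)) (hu2 : ∀ i, i ≠ i₀ → 1 / 2 ≤ |S.σ i u|) (hd : u ∣ r)
    (h1 : |S.σ i₀ r| ≤ 2 * pX (S.σ i₀ a) m) (h2 : ∀ i, i ≠ i₀ → |S.σ i r| ≤ 2) : r = 0 := by
  by_contra hr
  have h3 := S.norm_dvd hr hd
  rw [S.norm_split i₀, S.norm_split i₀] at h3
  set N := Fintype.card ι - 1 with hN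
  have hN' : Fintype.card ι = N + 1 := by omega
  have hA := h.four hn
  have hbig := h.big
  set A := S.σ i₀ a with hAdef
  have hX : 1 ≤ pX A m := pX_one_le (by linarith) m
  have h4 : ∏ i ∈ Finset.univ.erase i₀, |S.σ i r| ≤ 2 ^ N := by
    have := Finset.prod_le_prod (s := Finset.univ.erase i₀) (f := fun i => |S.σ i r|)
      (g := fun _ => (2 : ℝ)) (fun _ _ => abs_nonneg _) (fun i hi => h2 i (Finset.ne_of_mem_erase hi))
    simpa [Finset.card_erase_of_mem] using this
  have h5 : (1 / 2) ^ N ≤ ∏ i ∈ Finset.univ.erase i₀, |S.σ i u| := by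
    have := Finset.prod_le_prod (s := Finset.univ.erase i₀) (g := fun i => |S.σ i u|)
      (f := fun _ => (1 / 2 : ℝ)) (fun _ _ => by norm_num)
      (fun i hi => hu2 i (Finset.ne_of_mem_erase hi))
    simpa [Finset.card_erase_of_mem] using this
  have h6 : A * pX A m ≤ |S.σ i₀ u| := by
    rw [hu, pX_map]
    exact (pX_step (by linarith) m).trans (le_abs_self _)
  have h7 : A * pX A m * (1 / 2) ^ N ≤ (2 * pX A m) * 2 ^ N := by
    calc A * pX A m * (1 / 2) ^ N ≤ |S.σ i₀ u| * ∏ i ∈ Finset.univ.erase i₀, |S.σ i u| := by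
          gcongr
      _ ≤ |S.σ i₀ r| * ∏ i ∈ Finset.univ.erase i₀, |S.σ i r| := h3
      _ ≤ _ := by gcongr
  have h8 : A * (1 / 2) ^ N ≤ 2 * 2 ^ N := by
    have : pX A m * (A * (1 / 2) ^ N) ≤ pX A m * (2 * 2 ^ N) := by linarith
    exact le_of_mul_le_mul_left this (by linarith)
  rw [one_div, inv_pow, ← div_eq_mul_inv, div_le_iff₀ (by positivity)] at h8
  rw [hN', pow_succ, show (4 : ℝ) = 2 * 2 by norm_num, mul_pow] at hbig
  have : (0 : ℝ) < 2 ^ N * 2 ^ N := by positivity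
  nlinarith

theorem pX_mod {R : Type} [CommRing R] (a : R) (k m e : ℤ) :
    pX a m ∣ pX a (k + 2 * m * e) - pX a k ∨ pX a m ∣ pX a (k + 2 * m * e) + pX a k := by
  induction e using Int.induction_on with
  | zero => left; simp
  | succ e ih =>
    have h1 : pX a m ∣ pX a (k + 2 * m * (e + 1)) + pX a (k + 2 * m * e) := by
      rw [show k + 2 * m * (e + 1) = (k + 2 * m * e) + 2 * m by ring, pX_add_two_mul]
      exact Dvd.intro_left _ rfl
    rcases ih with ih | ih
    · right; have := h1.sub ih; convert this using 1; ring
    · left; have := h1.sub ih; convert this using 1; ring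
  | pred e ih =>
    have h1 : pX a m ∣ pX a (k + 2 * m * -e) + pX a (k + 2 * m * (-e - 1)) := by
      rw [show k + 2 * m * -e = (k + 2 * m * (-e - 1)) + 2 * m by ring, pX_add_two_mul]
      exact Dvd.intro_left _ rfl
    rcases ih with ih | ih
    · right; have := h1.sub ih; convert this using 1; ring
    · left; have := h1.sub ih; convert this using 1; ring

theorem Good.step_down (h : S.Good i₀ a) (hn : 2 ≤ Fintype.card ι) {m j k : ℤ} (hm : 0 < m)
    (hj : |j| < m) (hu2 : ∀ i, i ≠ i₀ → 1 / 2 ≤ |S.σ i (pX a m)|)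
    (hd : pX a m ∣ pX a k - pX a j ∨ pX a m ∣ pX a k + pX a j) :
    (2 * m) ∣ k - j ∨ (2 * m) ∣ k + j := by
  obtain ⟨M, rfl⟩ : ∃ M : ℕ, m = (M + 1 : ℕ) := ⟨(m - 1).toNat, by omega⟩
  set m : ℤ := ((M + 1 : ℕ) : ℤ) with hmdef
  have hA := h.four hn
  obtain ⟨k', e, hk, hk1, hk2⟩ : ∃ k' e : ℤ, k = k' + 2 * m * e ∧ -m ≤ k' ∧ k' ≤ m := by
    refine ⟨(k + m) % (2 * m) - m, (k + m) / (2 * m), ?_, ?_, ?_⟩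
    · have := Int.emod_add_mul_ediv (k + m) (2 * m); linarith
    · have := Int.emod_nonneg (k + m) (show 2 * m ≠ 0 by omega); omega
    · have := Int.emod_lt_of_pos (k + m) (show 0 < 2 * m by omega); omega
  have hd' : pX a m ∣ pX a k' - pX a j ∨ pX a m ∣ pX a k' + pX a j := by
    rcases hd with hd | hd <;> rcases pX_mod a k' m e with h1 | h1 <;> rw [← hk] at h1
    · left; have := hd.sub h1; convert this using 1; ring
    · right; have := h1.sub hd; convert this using 1; ring
    · right; have := hd.sub h1; convert this using 1; ring
    · left; have := h1.sub hd; convert this using 1; ring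
  have hmono := (pX_strictMono (A := S.σ i₀ a) (by linarith))
  have bnd : ∀ l : ℤ, |l| < m → |S.σ i₀ (pX a l)| ≤ pX (S.σ i₀ a) M := by
    intro l hl
    rw [pX_map, abs_of_nonneg (zero_le_one.trans (pX_one_le (by linarith) l)), ← pX_natAbs]
    exact hmono.monotone (by have := Int.abs_eq_natAbs l; omega)
  have hXM : 1 ≤ pX (S.σ i₀ a) M := pX_one_le (by linarith) _
  have hjne : pX a j ≠ 0 := by
    intro h0
    have h1 := pX_one_le (A := S.σ i₀ a) (by linarith) j
    rw [← pX_map, h0, map_zero] at h1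
    linarith
  by_cases hkm : |k'| = m
  · exfalso
    have e1 : pX a k' = pX a m := by rw [← pX_natAbs, ← hkm, Int.abs_eq_natAbs]
    rw [e1] at hd'
    have hdj : pX a m ∣ pX a j := by
      rcases hd' with h1 | h1
      · have := (dvd_refl (pX a m)).sub h1; simpa using this
      · have := h1.sub (dvd_refl (pX a m)); simpa using this
    refine hjne (h.small_zero hn (m := M) rfl hu2 hdj ?_ ?_)
    · linarith [bnd j hj]
    · intro i hi; linarith [h.pX_small j hi]
  · have hk' : |k'| < m := lt_of_le_of_ne (abs_le.2 ⟨hk1, hk2⟩) hkm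
    have key : |k'| = |j| := by
      have b1 := bnd k' hk'
      have b2 := bnd j hj
      have eqn : pX (S.σ i₀ a) k' = pX (S.σ i₀ a) j := by
        rcases hd' with h1 | h1
        · have := h.small_zero hn (m := M) rfl hu2 h1
            (by rw [map_sub]; exact (abs_sub _ _).trans (by linarith))
            (fun i hi => by
              rw [map_sub]
              exact (abs_sub _ _).trans (by linarith [h.pX_small j hi, h.pX_small k' hi]))
          rw [← pX_map, ← pX_map, sub_eq_zero.1 this]
        · exfalso
          have := h.small_zero hn (m := M) rfl hu2 h1
            (by rw [map_add]; exact (abs_add_le _ _).trans (by linarith))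
            (fun i hi => by
              rw [map_add]
              exact (abs_add_le _ _).trans (by linarith [h.pX_small j hi, h.pX_small k' hi]))
          have h2 := congrArg (S.σ i₀) this
          rw [map_add, map_zero, pX_map, pX_map] at h2
          linarith [pX_one_le (A := S.σ i₀ a) (by linarith) j,
            pX_one_le (A := S.σ i₀ a) (by linarith) k']
      rw [← pX_natAbs, ← pX_natAbs _ j] at eqn
      have := hmono.injective eqn
      rw [Int.abs_eq_natAbs, Int.abs_eq_natAbs, this]
    rcases abs_eq_abs.1 key with h1 | h1
    · left; exact ⟨e, by rw [hk, h1]; ring⟩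
    · right; exact ⟨e, by rw [hk, h1]; ring⟩

theorem Good.recur (h : S.Good i₀ a) {w : R} (hw : w ≠ 0) {η : ℝ} (hη : 0 < η) :
    ∃ r : ℕ, 1 ≤ r ∧ w ∣ pY a r ∧ ∀ i, i ≠ i₀ → |S.σ i (pX a r) - 1| < η := by
  obtain ⟨N, hN⟩ := exists_nat_gt (4 / η)
  have hNpos : (0 : ℝ) < N := lt_trans (by positivity) hN
  have hfin := S.fin w hw
  have fl : ∀ t : ℝ, |t| ≤ 2 → ⌊N * t⌋ ∈ Finset.Icc (-(2 * N : ℤ)) (2 * N) := by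
    intro t ht
    rw [abs_le] at ht
    rw [Finset.mem_Icc]
    constructor
    · rw [Int.le_floor]; push_cast; nlinarith
    · have h1 : (⌊N * t⌋ : ℝ) ≤ N * t := Int.floor_le _
      have h2 : (⌊N * t⌋ : ℝ) ≤ ((2 * N : ℤ) : ℝ) := by push_cast; nlinarith
      exact_mod_cast h2
  let f : ℕ → (R ⧸ Ideal.span {w}) × (R ⧸ Ideal.span {w}) ×
      ({i // i ≠ i₀} → (Finset.Icc (-(2 * N : ℤ)) (2 * N)) × (Finset.Icc (-(2 * N : ℤ)) (2 * N))) :=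
    fun k => (Ideal.Quotient.mk _ (pX a k), Ideal.Quotient.mk _ (pY a k), fun i =>
      (⟨⌊N * S.σ i (pX a k)⌋, fl _ ((h.pX_small k i.2).trans (by norm_num))⟩,
       ⟨⌊N * S.σ i (pY a k)⌋, fl _ (h.pY_small k i.2)⟩))
  obtain ⟨k, l, hkl, hf⟩ := Finite.exists_ne_map_eq_of_infinite f
  simp only [f, Prod.mk.injEq] at hf
  obtain ⟨f1, f2, f3⟩ := hf
  rw [Ideal.Quotient.eq, Ideal.mem_span_singleton] at f1 f2
  have P1 : w ∣ pY a ((k : ℤ) - l) := by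
    rw [pY_sub]
    have := (f2.mul_right (pX a l)).sub (f1.mul_right (pY a l))
    convert this using 1; ring
  have P2 : ∀ i, i ≠ i₀ → |S.σ i (pX a ((k : ℤ) - l)) - 1| < η := by
    intro i hi
    have g := congrFun f3 ⟨i, hi⟩
    simp only [Prod.mk.injEq, Subtype.mk.injEq] at g
    have g1 := Int.abs_sub_lt_one_of_floor_eq_floor g.1
    have g2 := Int.abs_sub_lt_one_of_floor_eq_floor g.2
    rw [← mul_sub, abs_mul, abs_of_pos hNpos] at g1 g2
    have hp := S.pell_map i (p_pell a l)
    have e : S.σ i (pX a ((k : ℤ) - l)) - 1 =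
        S.σ i (pX a l) * (S.σ i (pX a k) - S.σ i (pX a l)) +
        (1 - (S.σ i a) ^ 2) * (S.σ i (pY a l) * (S.σ i (pY a k) - S.σ i (pY a l))) := by
      rw [pX_sub]
      simp only [map_sub, map_mul, map_pow, map_one]
      linear_combination hp
    have c1 := h.pX_small l hi
    have c2 := h.pY_small l hi
    have c3 : |1 - (S.σ i a) ^ 2| ≤ 1 := by
      have c4 : (S.σ i a) ^ 2 ≤ 1 := by
        rw [sq_le_one_iff_abs_le_one]; linarith [h.small i hi]
      rw [abs_of_nonneg (by linarith)]
      linarith [sq_nonneg (S.σ i a)]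
    have c5 : |S.σ i (pX a ((k : ℤ) - l)) - 1| ≤ |S.σ i (pX a k) - S.σ i (pX a l)| +
        2 * |S.σ i (pY a k) - S.σ i (pY a l)| := by
      rw [e]
      refine (abs_add_le _ _).trans ?_
      rw [abs_mul, abs_mul, abs_mul]
      have t1 := abs_nonneg (S.σ i (pX a k) - S.σ i (pX a l))
      have t2 := abs_nonneg (S.σ i (pY a k) - S.σ i (pY a l))
      have t3 := abs_nonneg (S.σ i (pY a l))
      have t4 := abs_nonneg (1 - (S.σ i a) ^ 2)
      have t5 : |S.σ i (pY a l)| * |S.σ i (pY a k) - S.σ i (pY a l)| ≤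
        2 * |S.σ i (pY a k) - S.σ i (pY a l)| := by gcongr
      refine add_le_add ?_ ?_
      · nlinarith
      · refine le_trans ?_ t5
        exact mul_le_of_le_one_left (by positivity) c3
    rw [div_lt_iff₀ hη] at hN
    have : (N : ℝ) * |S.σ i (pX a ((k : ℤ) - l)) - 1| < N * η := by nlinarith
    exact lt_of_mul_lt_mul_left this hNpos.le
  refine ⟨((k : ℤ) - l).natAbs, by omega, ?_, ?_⟩
  · obtain h1 | h1 := ((k : ℤ) - l).natAbs_eq
    · rw [← h1]; exact P1
    · have : (((k : ℤ) - l).natAbs : ℤ) = -((k : ℤ) - l) := by omega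
      rw [this, pY_neg]; exact P1.neg_right
  · intro i hi
    rw [pX_natAbs]; exact P2 i hi
end RealSys

theorem prod_one_le_real {ι : Type} {s : Finset ι} {f : ι → ℝ} (h : ∀ i ∈ s, 1 ≤ f i) :
    1 ≤ ∏ i ∈ s, f i := by
  have := Finset.prod_le_prod (s := s) (f := fun _ => (1 : ℝ)) (g := f)
    (fun _ _ => zero_le_one) h
  simpa using this

namespace RealSys
variable {R : Type} [CommRing R] {ι : Type} [Fintype ι] [DecidableEq ι] (S : RealSys R ι)

/-- The diophantine formula defining the integers. -/
def IntFormula (a ξ : R) : Prop :=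
  ∃ x y u v w₀ w z b s t τ : R,
    x ^ 2 - (a ^ 2 - 1) * y ^ 2 = 1 ∧ u ^ 2 - (a ^ 2 - 1) * v ^ 2 = 1 ∧
    w₀ ^ 2 - (a ^ 2 - 1) * w ^ 2 = 1 ∧ z ∣ w ∧ w ^ 2 ∣ v ∧
    s ^ 2 - (b ^ 2 - 1) * t ^ 2 = 1 ∧ z ∣ b - 1 ∧ u ∣ b - a ∧ u ∣ s - x ∧ z ∣ t - ξ ∧
    S.TP (z - (2 + ξ ^ 2) * (1 + x ^ 2) ^ Fintype.card ι) ∧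
    S.TP (4 * u ^ 2 - (1 + a ^ 2)) ∧
    S.TP (1 - 16 * b ^ 2 + (a ^ 2 - 1) * τ ^ 2)

variable {S} {i₀ : ι} {a : R}

theorem Good.ne_zero (h : S.Good i₀ a) (hn : 2 ≤ Fintype.card ι) : a ≠ 0 := by
  intro h0
  have := h.four hn
  rw [h0, map_zero] at this
  linarith

theorem Good.pY_ne_zero (h : S.Good i₀ a) (hn : 2 ≤ Fintype.card ι) {k : ℤ} (hk : k ≠ 0) :
    pY a k ≠ 0 := by
  intro h0
  have h1 := pY_ne_zero_real (A := S.σ i₀ a) (by linarith [h.four hn]) k hk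
  rw [← pY_map, h0, map_zero] at h1
  exact h1 rfl

theorem Good.sound [IsDomain R] (h : S.Good i₀ a) (hn : 2 ≤ Fintype.card ι) {ξ : R}
    (hf : S.IntFormula a ξ) : ∃ n : ℤ, (n : R) = ξ := by
  obtain ⟨x, y, u, v, w₀, w, z, b, s, t, τ, e1, e2, e3, hzw, hwv, e4, hzb, hub, hus, hzt,
    tp1, tp2, tp3⟩ := hf
  have hA := h.four hn
  have ha0 := h.ne_zero hn
  have ha : ∀ i, i ≠ i₀ → |S.σ i a| ≤ 1 / 4 := fun i hi => (h.small i hi).trans (by norm_num)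
  obtain ⟨j, hj, -⟩ := S.rank_one i₀ hn ha0 ha e1
  obtain ⟨m, hm, hv⟩ := S.rank_one i₀ hn ha0 ha e2
  obtain ⟨l, -, hw⟩ := S.rank_one i₀ hn ha0 ha e3
  -- facts at the real places
  have q1 : ∀ i, (2 + (S.σ i ξ) ^ 2) * (1 + (S.σ i x) ^ 2) ^ Fintype.card ι ≤ S.σ i z := by
    intro i
    have := tp1.nonneg i
    simp only [map_sub, map_mul, map_add, map_pow, map_one, map_ofNat] at this
    linarith
  have q2 : ∀ i, 1 + (S.σ i a) ^ 2 ≤ 4 * (S.σ i u) ^ 2 := by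
    intro i
    have := tp2.nonneg i
    simp only [map_sub, map_mul, map_add, map_pow, map_one, map_ofNat] at this
    linarith
  have hz2 : ∀ i, 2 ≤ S.σ i z := by
    intro i
    refine le_trans ?_ (q1 i)
    have : 1 ≤ (1 + (S.σ i x) ^ 2) ^ Fintype.card ι :=
      one_le_pow₀ (by linarith [sq_nonneg (S.σ i x)])
    nlinarith [sq_nonneg (S.σ i ξ)]
  have husq : u ^ 2 = pX a m ^ 2 := by rcases hm with h1 | h1 <;> rw [h1] <;> ring
  have hxsq : x ^ 2 = pX a j ^ 2 := by rcases hj with h1 | h1 <;> rw [h1] <;> ring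
  have hm0 : m ≠ 0 := by
    rintro rfl
    have := q2 i₀
    rw [← map_pow _ u, husq, pX_zero] at this
    simp only [one_pow, map_one] at this
    nlinarith
  have hmhalf : ∀ i, 1 / 2 ≤ |S.σ i (pX a m)| := by
    intro i
    have h1 := q2 i
    rw [← map_pow _ u, husq, map_pow, ← sq_abs (S.σ i (pX a m))] at h1
    by_contra hc
    push Not at hc
    nlinarith [abs_nonneg (S.σ i (pX a m)), sq_nonneg (S.σ i a)]
  have hYm := h.pY_ne_zero hn hm0
  have hwl : pY a l ^ 2 ∣ pY a m := by
    have h1 : w ^ 2 = pY a l ^ 2 := by rcases hw with h1 | h1 <;> rw [h1] <;> ring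
    rw [← h1]
    rcases hv with h2 | h2
    · rw [← h2]; exact hwv
    · rw [← dvd_neg, ← h2]; exact hwv
  have hzm : z ∣ (m : R) := by
    refine dvd_trans ?_ (pY_sq_dvd a l m hYm hwl)
    rcases hw with h2 | h2
    · rw [← h2]; exact hzw
    · rw [← dvd_neg, ← h2]; exact hzw
  have hmR : (m : R) ≠ 0 := by
    intro h0
    have := congrArg (S.σ i₀) h0
    rw [map_intCast, map_zero] at this
    exact hm0 (by exact_mod_cast this)
  have hXj : |(j : ℝ)| < pX (S.σ i₀ a) j := natAbs_lt_pX (by linarith) j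
  have hXj1 : 1 ≤ pX (S.σ i₀ a) j := pX_one_le (by linarith) j
  have hx0 : (S.σ i₀ x) ^ 2 = pX (S.σ i₀ a) j ^ 2 := by
    rw [← map_pow, hxsq, map_pow, pX_map]
  have hprodz : ∏ i, |S.σ i z| = ∏ i, S.σ i z :=
    Finset.prod_congr rfl fun i _ => abs_of_nonneg (by linarith [hz2 i])
  have hjx : |(j : ℝ)| < 1 + (S.σ i₀ x) ^ 2 := by rw [hx0]; nlinarith
  have hjx' : |(j : ℝ)| ≤ (S.σ i₀ x) ^ 2 := by rw [hx0]; nlinarith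
  have hjm : |j| < |m| := by
    have h1 := S.norm_dvd hmR hzm
    simp only [map_intCast, Finset.prod_const, Finset.card_univ] at h1
    have h2 : (1 + (S.σ i₀ x) ^ 2) ^ Fintype.card ι ≤ ∏ i, |S.σ i z| := by
      rw [S.norm_split i₀, abs_of_nonneg (by linarith [hz2 i₀])]
      have h3 : 1 ≤ ∏ i ∈ Finset.univ.erase i₀, |S.σ i z| :=
        prod_one_le_real fun i _ => by
          rw [abs_of_nonneg (by linarith [hz2 i])]; linarith [hz2 i]
      have h4 := q1 i₀
      have h5 : 0 ≤ (1 + (S.σ i₀ x) ^ 2) ^ Fintype.card ι := by positivity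
      nlinarith [sq_nonneg (S.σ i₀ ξ), hz2 i₀]
    have h3 := le_of_pow_le_pow_left₀ (by omega) (abs_nonneg _) (h2.trans h1)
    have h4 : |(j : ℝ)| < |(m : ℝ)| := by linarith
    exact_mod_cast h4
  have hb0 : b ≠ 0 := by
    rintro rfl
    have h1 : z ∣ 1 := by simpa using hzb
    have h2 := S.norm_dvd one_ne_zero h1
    simp only [map_one, abs_one, Finset.prod_const_one] at h2
    rw [S.norm_split i₀, abs_of_nonneg (by linarith [hz2 i₀])] at h2
    have h3 : 1 ≤ ∏ i ∈ Finset.univ.erase i₀, |S.σ i z| :=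
      prod_one_le_real fun i _ => by
        rw [abs_of_nonneg (by linarith [hz2 i])]; linarith [hz2 i]
    nlinarith [hz2 i₀]
  have hbi : ∀ i, i ≠ i₀ → |S.σ i b| ≤ 1 / 4 := by
    intro i hi
    have h1 := tp3.nonneg i
    simp only [map_sub, map_mul, map_add, map_pow, map_one, map_ofNat] at h1
    have h2 : (S.σ i a) ^ 2 ≤ 1 := by
      rw [sq_le_one_iff_abs_le_one]; linarith [h.small i hi]
    apply abs_le_of_sq_le_sq _ (by norm_num)
    nlinarith [sq_nonneg (S.σ i τ)]
  obtain ⟨k, hs, ht⟩ := S.rank_one i₀ hn hb0 hbi e4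
  have hud : ∀ r, u ∣ r → pX a m ∣ r := by
    intro r hr
    rcases hm with h1 | h1
    · rwa [h1] at hr
    · rwa [h1, neg_dvd] at hr
  have d1 := pX_congr (hud _ hub) k
  have d2 := hud _ hus
  have d3 : pX a m ∣ pX a k - pX a j ∨ pX a m ∣ pX a k + pX a j := by
    rcases hs with h1 | h1 <;> rcases hj with h2 | h2 <;> rw [h1, h2] at d2
    · left; have := d2.sub d1; convert this using 1; ring
    · right; have := d2.sub d1; convert this using 1; ring
    · right; have := (d2.add d1).neg_right; convert this using 1; ring
    · left; have := (d2.add d1).neg_right; convert this using 1; ring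
  have habs : |m| = m ∨ |m| = -m := abs_choice m
  have hXabs : pX a |m| = pX a m := by
    rcases habs with h1 | h1 <;> rw [h1]
    rw [pX_neg]
  have d4 : (2 * |m|) ∣ k - j ∨ (2 * |m|) ∣ k + j :=
    h.step_down hn (abs_pos.2 hm0) hjm (fun i _ => by rw [hXabs]; exact hmhalf i)
      (by rw [hXabs]; exact d3)
  have d5 : ∀ q : ℤ, (2 * |m|) ∣ q → z ∣ (q : R) := by
    intro q hq
    have h1 : m ∣ q := ((dvd_abs m m).2 dvd_rfl).trans ((Dvd.intro_left 2 rfl).trans hq)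
    obtain ⟨c, rfl⟩ := h1
    push_cast
    exact hzm.mul_right _
  have d6 : z ∣ pY b k - k := by
    have := pY_congr hzb k
    rwa [pY_at_one] at this
  have d7 : z ∣ ξ - (j : R) ∨ z ∣ ξ + (j : R) := by
    rcases d4 with h1 | h1 <;> rcases ht with h2 | h2 <;> rw [h2] at hzt <;>
      have h3 := d5 _ h1 <;> push_cast at h3
    · left; have := (d6.sub hzt).add h3; convert this using 1; ring
    · right; have := ((d6.add hzt).add h3).neg_right; convert this using 1; ring
    · right; have := (d6.sub hzt).add h3; convert this using 1; ring
    · left; have := ((d6.add hzt).add h3).neg_right; convert this using 1; ring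
  have key : ∀ c : ℤ, |c| = |j| → z ∣ ξ - (c : R) → (c : R) = ξ := by
    intro c hc hd
    by_contra hne
    have h1 := S.norm_dvd (sub_ne_zero.2 (Ne.symm hne)) hd
    rw [hprodz] at h1
    have hcj : |(c : ℝ)| = |(j : ℝ)| := by exact_mod_cast hc
    have h2 : ∏ i, |S.σ i (ξ - (c : R))| ≤ ∏ i, ((1 + |S.σ i ξ|) * (1 + |(j : ℝ)|)) := by
      refine Finset.prod_le_prod (fun _ _ => abs_nonneg _) fun i _ => ?_
      rw [map_sub, map_intCast]
      refine (abs_sub _ _).trans ?_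
      rw [hcj]
      nlinarith [abs_nonneg (S.σ i ξ), abs_nonneg (j : ℝ)]
    rw [Finset.prod_mul_distrib, Finset.prod_const, Finset.card_univ] at h2
    have h3 : (∏ i, (2 + (S.σ i ξ) ^ 2)) * (1 + |(j : ℝ)|) ^ Fintype.card ι ≤ ∏ i, S.σ i z := by
      calc (∏ i, (2 + (S.σ i ξ) ^ 2)) * (1 + |(j : ℝ)|) ^ Fintype.card ι
          ≤ (∏ i, (2 + (S.σ i ξ) ^ 2)) * ∏ i, (1 + (S.σ i x) ^ 2) ^ Fintype.card ι := by
            refine mul_le_mul_of_nonneg_left ?_ (Finset.prod_nonneg fun i _ => by positivity)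
            rw [← Finset.mul_prod_erase _ _ (Finset.mem_univ i₀)]
            have g1 : (1 + |(j : ℝ)|) ^ Fintype.card ι ≤ (1 + (S.σ i₀ x) ^ 2) ^ Fintype.card ι := by
              gcongr
            have g2 : 1 ≤ ∏ i ∈ Finset.univ.erase i₀, (1 + (S.σ i x) ^ 2) ^ Fintype.card ι :=
              prod_one_le_real fun i _ => one_le_pow₀ (by linarith [sq_nonneg (S.σ i x)])
            exact g1.trans (le_mul_of_one_le_right (by positivity) g2)
        _ = ∏ i, ((2 + (S.σ i ξ) ^ 2) * (1 + (S.σ i x) ^ 2) ^ Fintype.card ι) := by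
            rw [Finset.prod_mul_distrib]
        _ ≤ _ := Finset.prod_le_prod (fun i _ => by positivity) fun i _ => q1 i
    have h4 : ∏ i, (1 + |S.σ i ξ|) < ∏ i, (2 + (S.σ i ξ) ^ 2) := by
      refine Finset.prod_lt_prod_of_nonempty (fun i _ => by positivity) (fun i _ => ?_)
        ⟨i₀, Finset.mem_univ _⟩
      rw [← sq_abs (S.σ i ξ)]
      nlinarith [sq_nonneg (|S.σ i ξ| - 1 / 2)]
    have h5 : 0 < (1 + |(j : ℝ)|) ^ Fintype.card ι := by positivity
    nlinarith [mul_lt_mul_of_pos_right h4 h5]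
  rcases d7 with h1 | h1
  · exact ⟨j, key j rfl h1⟩
  · exact ⟨-j, key (-j) (abs_neg j) (by push_cast; rwa [sub_neg_eq_add])⟩

theorem Good.complete [IsDomain R] (h : S.Good i₀ a) (hn : 2 ≤ Fintype.card ι) (j : ℤ) :
    S.IntFormula a (j : R) := by
  have : Nonempty ι := ⟨i₀⟩
  have hA := h.four hn
  set P : R := (2 + (j : R) ^ 2) * (1 + (pX a j) ^ 2) ^ Fintype.card ι with hP
  obtain ⟨kM, hkM⟩ := Finite.exists_max (fun i => S.σ i P)
  obtain ⟨D', hD'⟩ := exists_nat_gt (S.σ kM P)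
  set D := D' + 1 with hD
  have hDP : ∀ i, S.σ i P < (D : ℝ) - 1 := fun i => by
    rw [hD]; push_cast; linarith [hkM i]
  -- continuity of the Chebyshev polynomial at one
  obtain ⟨η, hη, hcont⟩ : ∃ η > 0, ∀ t : ℝ, |t - 1| < η → |pY t D - D| < 1 := by
    have hc : Continuous (fun t : ℝ => pY t D) := Polynomial.continuous _
    obtain ⟨η, hη, hh⟩ := Metric.continuous_iff.1 hc 1 1 one_pos
    refine ⟨η, hη, fun t ht => ?_⟩
    have := hh t (by rwa [Real.dist_eq])
    rw [Real.dist_eq, pY_at_one] at this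
    exact_mod_cast this
  obtain ⟨r, hr, -, hr2⟩ := h.recur (w := 1) one_ne_zero hη
  set z : R := pY (pX a r) D with hz
  have hzP : ∀ i, S.σ i P < S.σ i z := by
    intro i
    refine (hDP i).trans ?_
    rw [hz, pY_map]
    by_cases hi : i = i₀
    · subst hi
      rw [pX_map]
      have := (pX_ge_pow (A := pX (S.σ i a) r) (pX_one_le (by linarith) _) D).2
      linarith
    · have := hcont _ (hr2 i hi)
      rw [abs_lt] at this
      linarith
  have hrD : ((r : ℤ) * D) ≠ 0 := by
    refine mul_ne_zero ?_ ?_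
    · omega
    · rw [hD]; omega
  set w : R := pY a (r * D) with hw
  have hw0 : w ≠ 0 := h.pY_ne_zero hn hrD
  have hzw : z ∣ w := ⟨pY a r, by rw [hw, pY_mul, mul_comm]⟩
  obtain ⟨m, hm, hm1, hm2⟩ := h.recur (w := w ^ 2) (pow_ne_zero 2 hw0) (η := 1 / 4) (by norm_num)
  set u : R := pX a m with hu
  set v : R := pY a m with hv
  have huv : u ^ 2 - (a ^ 2 - 1) * v ^ 2 = 1 := p_pell a m
  have hv0 : v ≠ 0 := h.pY_ne_zero hn (by omega)
  have huA : S.σ i₀ a ≤ S.σ i₀ u := by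
    rw [hu, pX_map]
    refine le_trans ?_ (pX_ge_pow (by linarith) m).1
    calc S.σ i₀ a = S.σ i₀ a ^ 1 := (pow_one _).symm
      _ ≤ _ := pow_le_pow_right₀ (by linarith) hm
  have hzv : z ∣ v := hzw.trans ((Dvd.intro_left _ (by ring)).trans hm1)
  have hzu : z ∣ u ^ 2 - 1 := by
    have : u ^ 2 - 1 = (a ^ 2 - 1) * v * v := by linear_combination huv
    rw [this]; exact hzv.mul_left _
  have hui : ∀ i, i ≠ i₀ → (S.σ i u) ^ 2 < 1 := by
    intro i hi
    have h1 := S.pell_map i huv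
    have h2 : S.σ i v ≠ 0 := fun h0 => hv0 (S.inj i (by rw [h0, map_zero]))
    have h3 : 0 < (S.σ i v) ^ 2 := by positivity
    have h4 : (S.σ i a) ^ 2 < 1 := by
      rw [sq_lt_one_iff_abs_lt_one]; linarith [h.small i hi]
    nlinarith
  obtain ⟨q, hq⟩ : ∃ q : ℕ, 1 ≤ q ∧ ∀ i, i ≠ i₀ → ((S.σ i u) ^ 2) ^ q < 1 / 16 := by
    have h1 : ∀ i, ∀ᶠ q : ℕ in Filter.atTop, i ≠ i₀ → ((S.σ i u) ^ 2) ^ q < 1 / 16 := by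
      intro i
      by_cases hi : i = i₀
      · exact Filter.Eventually.of_forall fun q hh => absurd hi hh
      · have := tendsto_pow_atTop_nhds_zero_of_lt_one (sq_nonneg (S.σ i u)) (hui i hi)
        filter_upwards [this.eventually_lt_const (show (0 : ℝ) < 1 / 16 by norm_num)] with q hq _
        exact hq
    obtain ⟨q, hq⟩ := ((Filter.eventually_all.2 h1).and (Filter.eventually_ge_atTop 1)).exists
    exact ⟨q, hq.2, hq.1⟩
  set b : R := (u ^ 2) ^ q + a * (1 - u ^ 2) with hb
  have hub : u ∣ b - a := by
    refine ⟨u * (u ^ 2) ^ (q - 1) - a * u, ?_⟩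
    obtain ⟨q', rfl⟩ : ∃ q', q = q' + 1 := ⟨q - 1, by omega⟩
    rw [hb, Nat.add_sub_cancel, pow_succ]; ring
  have hzb : z ∣ b - 1 := by
    have h1 : u ^ 2 - 1 ∣ (u ^ 2) ^ q - 1 := sub_one_dvd_pow_sub_one _ _
    have := (hzu.trans h1).sub (hzu.mul_left a)
    convert this using 1; rw [hb]; ring
  have hbi : ∀ i, i ≠ i₀ → |S.σ i b| ≤ 3 / 16 := by
    intro i hi
    rw [hb]
    simp only [map_add, map_mul, map_sub, map_one, map_pow]
    refine (abs_add_le _ _).trans ?_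
    have h1 := hq.2 i hi
    have h2 := hui i hi
    have h3 : 0 ≤ ((S.σ i u) ^ 2) ^ q := by positivity
    rw [abs_of_nonneg h3, abs_mul, abs_of_nonneg (show 0 ≤ 1 - (S.σ i u) ^ 2 by linarith)]
    nlinarith [h.small i hi, abs_nonneg (S.σ i a), sq_nonneg (S.σ i u)]
  obtain ⟨Q, hQ1, hQ⟩ : ∃ Q : ℕ, 1 ≤ Q ∧ 16 * (S.σ i₀ b) ^ 2 < (S.σ i₀ a) ^ Q := by
    have h1 := (tendsto_pow_atTop_atTop_of_one_lt (r := S.σ i₀ a) (by linarith)).eventually_gt_atTop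
      (16 * (S.σ i₀ b) ^ 2)
    obtain ⟨Q, hQ⟩ := (h1.and (Filter.eventually_ge_atTop 1)).exists
    exact ⟨Q, hQ.2, hQ.1⟩
  refine ⟨pX a j, pY a j, u, v, pX a (r * D), w, z, b, pX b j, pY b j, a ^ Q, p_pell a j, huv,
    p_pell _ _, hzw, hm1, p_pell _ _, hzb, hub, hub.trans (Polynomial.sub_dvd_eval_sub _ _ _), ?_,
    TP.of_pos S ?_, TP.of_pos S ?_, TP.of_pos S ?_⟩
  · have := pY_congr hzb j
    rwa [pY_at_one] at this
  · intro i
    rw [map_sub]; linarith [hzP i]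
  · intro i
    simp only [map_add, map_mul, map_sub, map_one, map_pow, map_ofNat]
    by_cases hi : i = i₀
    · subst hi; nlinarith
    · have h1 := hm2 i hi
      rw [abs_lt] at h1
      have h4 : (S.σ i a) ^ 2 < 1 := by
        rw [sq_lt_one_iff_abs_lt_one]; linarith [h.small i hi]
      nlinarith
  · intro i
    simp only [map_add, map_mul, map_sub, map_one, map_pow, map_ofNat]
    by_cases hi : i = i₀
    · subst hi
      have h1 : 1 ≤ (S.σ i a) ^ Q := one_le_pow₀ (by linarith)
      have h2 : 1 ≤ (S.σ i a) ^ 2 - 1 := by nlinarith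
      have h3 : (S.σ i a) ^ Q ≤ ((S.σ i a) ^ Q) ^ 2 := by nlinarith
      nlinarith
    · have h1 := hbi i hi
      have h2 : (S.σ i b) ^ 2 ≤ (3 / 16) ^ 2 := by rw [← sq_abs]; gcongr
      have h3 : ((S.σ i a) ^ Q) ^ 2 ≤ (1 / 8) ^ 2 := by
        rw [← sq_abs, abs_pow]
        gcongr
        calc |S.σ i a| ^ Q ≤ |S.σ i a| ^ 1 :=
              pow_le_pow_of_le_one (abs_nonneg _) (by linarith [h.small i hi]) hQ1
          _ ≤ 1 / 8 := by rw [pow_one]; exact h.small i hi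
      nlinarith [sq_nonneg (S.σ i a), sq_nonneg ((S.σ i a) ^ Q)]

variable (S) in
theorem exists_good (i₀ : ι) (hn : 2 ≤ Fintype.card ι) : ∃ a, S.Good i₀ a := by
  obtain ⟨c, hc1, hc2⟩ := S.approx i₀ (1 / 4 ^ (Fintype.card ι + 2)) (by positivity)
  have hc0 : c ≠ 0 := by
    rintro rfl
    rw [map_zero, abs_zero] at hc2
    linarith
  set n := Fintype.card ι with hnn
  have h1 := S.norm_bound i₀ hc0 (fun i hi => (hc1 i hi).le)
  have h2 : (4 : ℝ) ^ n < |S.σ i₀ c| := by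
    have h3 : (1 / (4 : ℝ) ^ (n + 2)) ^ (n - 1) ≤ 1 / 4 ^ (n + 2) := by
      have h0 : (1 : ℝ) ≤ 4 ^ (n + 2) := one_le_pow₀ (by norm_num)
      calc (1 / (4 : ℝ) ^ (n + 2)) ^ (n - 1) ≤ (1 / 4 ^ (n + 2)) ^ 1 :=
            pow_le_pow_of_le_one (by positivity) (by rw [div_le_one (by positivity)]; exact h0)
              (by omega)
        _ = _ := pow_one _
    have h4 : 1 ≤ |S.σ i₀ c| * (1 / 4 ^ (n + 2)) :=
      h1.trans (mul_le_mul_of_nonneg_left h3 (abs_nonneg _))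
    rw [mul_one_div, le_div_iff₀ (by positivity), one_mul, pow_add] at h4
    have : (0 : ℝ) < 4 ^ n := by positivity
    linarith
  have hs : ∀ i, i ≠ i₀ → |S.σ i c| ≤ 1 / 8 := by
    intro i hi
    refine (hc1 i hi).le.trans ?_
    refine one_div_le_one_div_of_le (by norm_num) ?_
    calc (8 : ℝ) ≤ 4 ^ 2 := by norm_num
      _ ≤ 4 ^ (n + 2) := pow_le_pow_right₀ (by norm_num) (by omega)
  rcases abs_choice (S.σ i₀ c) with h5 | h5
  · exact ⟨c, hs, by rw [← h5]; exact h2⟩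
  · exact ⟨-c, by simpa using hs, by rw [map_neg, ← h5]; exact h2⟩

variable (S) in
theorem intFormula_dio (a : R) : DioPred (fun v : Unit → R => S.IntFormula a (v ())) := by
  unfold IntFormula
  repeat' (first | apply DioPred.ex)
  repeat' (first | apply DioPred.and | apply DioPred.dvd | apply TP.dio | apply DioPred.eq |
    apply IsPolyFun.add | apply IsPolyFun.sub | apply IsPolyFun.mul | apply IsPolyFun.pow |
    apply IsPolyFun.proj | apply IsPolyFun.const)

theorem isDio_int [IsDomain R] (S : RealSys R ι) (i₀ : ι) (hn : 2 ≤ Fintype.card ι) :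
    IsDiophantineOver R {x : R | ∃ n : ℤ, (n : R) = x} := by
  obtain ⟨a, ha⟩ := S.exists_good i₀ hn
  refine DioPred.isDio ((S.intFormula_dio a).congr fun v => ?_)
  constructor
  · rintro ⟨n, hn'⟩
    rw [← hn']; exact ha.complete hn n
  · exact fun hf => ha.sound hn hf
end RealSys

section totallyReal
open NumberField NumberField.InfinitePlace

theorem tr_card (F : Type) [Field F] [NumberField F] [IsTotallyReal F] :
    Fintype.card (InfinitePlace F) = Module.finrank ℚ F := by
  have h := InfinitePlace.card_add_two_mul_card_eq_rank F
  have h2 := InfinitePlace.card_eq_nrRealPlaces_add_nrComplexPlaces F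
  rw [IsTotallyReal.nrComplexPlaces_eq_zero] at h h2
  omega

/-- The embedding attached to an infinite place of a totally real field. -/
noncomputable def trEmb (F : Type) [Field F] [NumberField F] [IsTotallyReal F]
    (w : InfinitePlace F) : 𝓞 F →+* ℝ :=
  (embedding_of_isReal (IsTotallyReal.isReal w)).comp (algebraMap (𝓞 F) F)

theorem trEmb_abs (F : Type) [Field F] [NumberField F] [IsTotallyReal F]
    (w : InfinitePlace F) (x : 𝓞 F) : |trEmb F w x| = w (x : F) := by
  rw [← Real.norm_eq_abs]
  exact norm_embedding_of_isReal (IsTotallyReal.isReal w) (x : F)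

/-- The ring of integers of a totally real field with its real embeddings. -/
noncomputable def trSys (F : Type) [Field F] [NumberField F] [IsTotallyReal F] :
    RealSys (𝓞 F) (InfinitePlace F) where
  σ := trEmb F
  inj w := by
    have h : Function.Injective ((embedding_of_isReal (IsTotallyReal.isReal w)) ∘
        (algebraMap (𝓞 F) F)) :=
      (RingHom.injective _).comp RingOfIntegers.coe_injective
    exact h
  norm r hr := by
    simp_rw [trEmb_abs]
    have h := InfinitePlace.prod_eq_abs_norm (r : F)
    simp only [IsTotallyReal.mult_eq, pow_one] at h
    rw [h, ← Algebra.coe_norm_int, ← Int.cast_one, ← Int.cast_abs, Rat.cast_intCast, Int.cast_le]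
    exact Int.one_le_abs (Algebra.norm_ne_zero_iff.mpr hr)
  approx w₁ δ hδ := by
    simp_rw [trEmb_abs]
    obtain ⟨u, hu⟩ := Units.dirichletUnitTheorem.exists_unit F w₁
    have hlt : ∀ w : InfinitePlace F, w ≠ w₁ → w ((u : 𝓞 F) : F) < 1 := by
      intro w hw
      by_contra hc
      push Not at hc
      exact absurd (hu w hw) (not_lt.mpr (Real.log_nonneg hc))
    have hge : 1 ≤ w₁ ((u : 𝓞 F) : F) :=
      one_le_of_lt_one u.ne_zero (fun z hz => hlt z hz)
    have hev : ∀ᶠ q : ℕ in Filter.atTop, ∀ w : InfinitePlace F, w ≠ w₁ →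
        (w ((u : 𝓞 F) : F)) ^ q < δ := by
      rw [Filter.eventually_all]
      intro w
      by_cases hw : w = w₁
      · simp [hw]
      · have := (tendsto_pow_atTop_nhds_zero_of_lt_one (apply_nonneg w _) (hlt w hw)).eventually_lt_const hδ
        filter_upwards [this] with q hq _ using hq
    obtain ⟨q, hq⟩ := hev.exists
    refine ⟨(u : 𝓞 F) ^ q, fun w hw => ?_, ?_⟩
    · simpa using hq w hw
    · simpa using one_le_pow₀ hge
  fin w hw := Ring.HasFiniteQuotients.finiteQuotient (by simpa using hw)
  rank γ hγ α := by
    classical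
    by_contra hc
    push Not at hc
    have hcard : Fintype.card (Option (InfinitePlace F)) ≤ Module.finrank ℤ (𝓞 F) := by
      refine LinearIndependent.fintype_card_le_finrank (b := fun o : Option (InfinitePlace F) => o.elim α γ) ?_
      rw [Fintype.linearIndependent_iff] at hγ ⊢
      intro g hg
      rw [Fintype.sum_option] at hg
      simp only [Option.elim, zsmul_eq_mul] at hg
      have h0 : g none = 0 := by
        by_contra h0
        refine hc (g none) (fun i => -(g (some i))) h0 ?_
        push_cast
        simp only [neg_mul, Finset.sum_neg_distrib]
        linear_combination hg
      have h1 := hγ (fun i => g (some i)) (by simpa [h0] using hg)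
      rintro (_ | i)
      · exact h0
      · exact h1 i
    rw [Fintype.card_option, tr_card, RingOfIntegers.rank] at hcard
    omega

theorem tr_isDio (F : Type) [Field F] [NumberField F] [IsTotallyReal F] :
    IsDiophantineOver (𝓞 F) {x : 𝓞 F | ∃ n : ℤ, (n : 𝓞 F) = x} := by
  classical
  obtain ⟨w⟩ := (inferInstance : Nonempty (InfinitePlace F))
  by_cases hn : 2 ≤ Fintype.card (InfinitePlace F)
  · exact (trSys F).isDio_int w hn
  · have h1 : Module.finrank ℚ F = 1 := by
      have := Module.finrank_pos (R := ℚ) (M := F)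
      rw [tr_card] at hn
      omega
    refine DioPred.isDio ((DioPred.eq (IsPolyFun.const 0) (IsPolyFun.const 0)).congr fun v => ?_)
    refine ⟨fun _ => rfl, fun _ => ?_⟩
    obtain ⟨q, hq⟩ := (finrank_eq_one_iff_of_nonzero' (1 : F) one_ne_zero).mp h1 (v () : F)
    have hq' : algebraMap ℚ F q = (v () : F) := by rw [← hq, Algebra.smul_def, mul_one]
    have hi : IsIntegral ℤ q := by
      rw [← isIntegral_algebraMap_iff (algebraMap ℚ F).injective, hq']
      exact RingOfIntegers.isIntegral_coe _
    obtain ⟨n, hn⟩ := IsIntegrallyClosed.isIntegral_iff.mp hi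
    refine ⟨n, RingOfIntegers.coe_injective ?_⟩
    refine Eq.trans ?_ hq'
    rw [← hn]
    simp

end totallyReal

/-- If for every quadratic extension `L/K` of number fields the image of
`𝒪_K` in `𝒪_L` has a diophantine definition over `𝒪_L`, then for every number field `M` the
image of `ℤ` in `𝒪_M` has a diophantine definition over `𝒪_M`. -/
theorem stmt_3
    (H : ∀ (K L : Type) [Field K] [NumberField K] [Field L] [NumberField L]
      [Algebra K L], Module.finrank K L = 2 →
      IsDiophantineOver (NumberField.RingOfIntegers L)
        {x : NumberField.RingOfIntegers L | ∃ y : NumberField.RingOfIntegers K,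
          algebraMap K L (algebraMap (NumberField.RingOfIntegers K) K y)
            = algebraMap (NumberField.RingOfIntegers L) L x})
    (M : Type) [Field M] [NumberField M] :
    IsDiophantineOver (NumberField.RingOfIntegers M)
      {x : NumberField.RingOfIntegers M | ∃ n : ℤ, (n : NumberField.RingOfIntegers M) = x} := by
  exact reduction H (fun F _ _ _ => tr_isDio F) M
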